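/- arXiv:2509.12576 — 3 statements merged into one kernel-verified Lean document; each statement's English description precedes it below -/
import Mathlib

section
/- Let R be an analytically unramified one-dimensional Cohen–Macaulay local ring with infinite residue field, and let I be a regular ideal of R. Then the integral closure of I satisfies \bar{I} = I\bar{R} ∩ R, where \bar{R} is the integral closure of R in its total quotient ring. In particular, any regular ideal that is also an ideal of \bar{R} is integrally closed. -/
open IsLocalRing

noncomputable def traceIdeal (R : Type*) [CommRing R] (M : Type*) [AddCommGroup M]
    [Module R M] : Ideal R :=
  ⨆ f : M →ₗ[R] R, LinearMap.range f

def IsCohenMacaulayLocalRing (R : Type*) [CommRing R] [IsLocalRing R] : Prop :=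
  ∃ rs : List R, (∀ r ∈ rs, r ∈ maximalIdeal R) ∧ RingTheory.Sequence.IsRegular R rs ∧
    ringKrullDim R = rs.length

noncomputable def moduleLength (R M : Type*) [CommRing R] [AddCommGroup M] [Module R M] :
    WithBot ℕ∞ :=
  Order.krullDim (Submodule R M)

noncomputable def conductorIdeal (R : Type*) [CommRing R] : Ideal R :=
  Submodule.colon (1 : Submodule R (FractionRing R))
    (Subalgebra.toSubmodule (integralClosure R (FractionRing R)))

def idealIntegralClosure {R : Type*} [CommRing R] (I : Ideal R) : Set R :=
  {x | ∃ n : ℕ, 0 < n ∧ ∃ a : ℕ → R, (∀ i ∈ Finset.Icc 1 n, a i ∈ I ^ i) ∧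
    x ^ n + ∑ i ∈ Finset.Icc 1 n, a i * x ^ (n - i) = 0}

def HasMinimalMultiplicity (R : Type*) [CommRing R] [IsLocalRing R] : Prop :=
  ∃ x : R, (x ∈ maximalIdeal R ∧
      ∃ n : ℕ, maximalIdeal R ^ (n + 1) = Ideal.span {x} * maximalIdeal R ^ n) ∧
    maximalIdeal R ^ 2 = Ideal.span {x} * maximalIdeal R

/-!
Write `A` for the integral closure of `R` in its total ring of fractions `K`. Since `R[X]` has
dimension at most two, every `t : K` is a root of polynomials over `R` whose coefficients generate
the unit ideal; as `A` is integrally closed, this makes `A + A t` invertible, and hence every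
finitely generated `A`-submodule of `K` containing a unit of `K`. In particular `I A` has an
inverse `L`. If `x` is integral over `I` and `q ∈ L`, multiplying the roots of an equation for `x`
by `q` shows that `q x` is integral over `A`. So `x L ⊆ A`, that is `x ∈ I A`. Conversely, an
element of `I A` is integral over `I` because `A` is integral over `R`.
-/

open Polynomial Submodule nonZeroDivisors

section InvertibleSubmodules

variable {A K : Type*} [CommRing A] [CommRing K] [Algebra A K]

lemma isUnit_of_one_mem_mul_one_div {J : Submodule A K} (h : 1 ∈ J * (1 / J)) : IsUnit J :=
  .of_mul_eq_one _ (mul_one_div_le_one.antisymm (one_le.mpr h))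

-- Locally `J` is principal: the products `s q ∈ A` with `s ∈ J` and `q ∈ J⁻¹` generate the unit
-- ideal, and where `s q` is invertible `J + A t` is `q⁻¹ (A + A t q)`.
lemma isUnit_sup_span_singleton (hpair : ∀ t : K, IsUnit (span A {1, t})) {J : Submodule A K}
    (hJ : IsUnit J) (t : K) : IsUnit (J ⊔ span A {t}) := by
  obtain ⟨J', hJJ'⟩ := hJ.exists_right_inv
  set M := J ⊔ span A {t}
  have htM : t ∈ M := mem_sup_right (mem_span_singleton_self t)
  suffices J * J' ≤ M * (1 / M) from
    isUnit_of_one_mem_mul_one_div (this (hJJ' ▸ one_le.mp le_rfl))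
  refine mul_le.mpr fun s hs q hq ↦ ?_
  obtain ⟨N', hNN'⟩ := (hpair (t * q)).exists_right_inv
  set N := span A {1, t * q}
  have hMq : M * span A {q} ≤ N := by
    rw [Submodule.sup_mul, sup_le_iff, span_mul_span, Set.singleton_mul_singleton]
    constructor
    · calc J * span A {q} ≤ J * J' := by gcongr; simpa using hq
        _ = 1 := hJJ'
        _ ≤ N := one_le.mpr (subset_span (by simp))
    · exact span_mono (by simp)
  have hqN' : span A {q} * N' ≤ 1 / M := by
    rw [Submodule.le_div_iff_mul_le]
    calc span A {q} * N' * M = M * span A {q} * N' := by ring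
      _ ≤ N * N' := by gcongr
      _ = 1 := hNN'
  have hsqN : span A {s * q} * N ≤ M * span A {q} := by
    obtain ⟨r, hr⟩ := mem_one.mp (hJJ' ▸ mul_mem_mul hs hq : s * q ∈ (1 : Submodule A K))
    rw [span_mul_span, span_le, Set.singleton_mul]
    rintro _ ⟨_, rfl | rfl, rfl⟩
    · simpa using mul_mem_mul (mem_sup_left hs : s ∈ M) (mem_span_singleton_self q)
    · simp only [← hr, ← Algebra.smul_def, SetLike.mem_coe]
      exact smul_mem _ r (mul_mem_mul htM (mem_span_singleton_self q))
  have hsq : span A {s * q} ≤ M * (1 / M) :=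
    calc span A {s * q} = span A {s * q} * N * N' := by rw [mul_assoc, hNN', mul_one]
      _ ≤ M * span A {q} * N' := by gcongr
      _ = M * (span A {q} * N') := mul_assoc ..
      _ ≤ M * (1 / M) := by gcongr
  exact hsq (mem_span_singleton_self _)

lemma isUnit_of_fg_of_isUnit_mem (hpair : ∀ t : K, IsUnit (span A {1, t})) {J : Submodule A K}
    (hJ : J.FG) {u : K} (hu : IsUnit u) (huJ : u ∈ J) : IsUnit J := by
  classical
  obtain ⟨s, rfl⟩ := hJ
  suffices ∀ s : Finset K, IsUnit (span A {u} ⊔ span A (s : Set K)) by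
    simpa [sup_eq_right.mpr ((span_singleton_le_iff_mem u _).mpr huJ)] using this s
  intro s
  induction s using Finset.induction_on with
  | empty => simpa using hu.map (spanSingleton A)
  | insert t s _ ih =>
    rw [Finset.coe_insert, span_insert, sup_comm (span A {t}), ← sup_assoc]
    exact isUnit_sup_span_singleton hpair ih t

lemma leadingCoeff_mem_one_div_span_pair [IsIntegrallyClosedIn A K] {t : K} {f : A[X]}
    (hf : aeval t f = 0) : algebraMap A K f.leadingCoeff ∈ 1 / span A {1, t} := by
  suffices span A {1, t} ≤ (1 : Submodule A K).comap (LinearMap.mulLeft A (algebraMap A K _)) from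
    mem_div_iff_forall_mul_mem.mpr this
  obtain ⟨d, hd⟩ := IsIntegrallyClosedIn.isIntegral_iff.mp (isIntegral_leadingCoeff_smul f t hf)
  rw [span_le, Set.pair_subset_iff]
  exact ⟨by simp, mem_one.mpr ⟨d, by rw [hd, Algebra.smul_def]; rfl⟩⟩

-- If `f` has leading term `c X ^ (n + 1)`, then `c t` lies in `A` because it is integral, and
-- replacing this term by `(c t) X ^ n` gives a polynomial of lower degree that vanishes at `t`.
lemma coeff_mem_span_pair_mul_one_div [IsIntegrallyClosedIn A K] {t : K} {f : A[X]}
    (hf : aeval t f = 0) (i : ℕ) :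
    algebraMap A K (f.coeff i) ∈ span A {1, t} * (1 / span A {1, t}) := by
  induction hn : f.natDegree using Nat.strong_induction_on generalizing f with | _ n ih
  obtain _ | n := n
  · rw [eq_C_of_natDegree_eq_zero hn, aeval_C] at hf
    rw [eq_C_of_natDegree_eq_zero hn, coeff_C]
    split_ifs <;> simp [hf]
  set N := span A {1, t}
  have hc : algebraMap A K f.leadingCoeff ∈ 1 / N := leadingCoeff_mem_one_div_span_pair hf
  have htN : t ∈ N := subset_span (by simp)
  obtain ⟨d, hd⟩ := mem_one.mp (mem_div_iff_forall_mul_mem.mp hc t htN)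
  have hcM : algebraMap A K f.leadingCoeff ∈ N * (1 / N) := by
    simpa using mul_mem_mul (subset_span (by simp) : (1 : K) ∈ N) hc
  have hdM : algebraMap A K d ∈ N * (1 / N) := hd ▸ mul_comm t _ ▸ mul_mem_mul htN hc
  let g : A[X] := f.eraseLead + C d * X ^ n
  have hfg : f = g - C d * X ^ n + C f.leadingCoeff * X ^ (n + 1) := by
    simp [g, ← hn, eraseLead_add_C_mul_X_pow]
  have hg : aeval t g = 0 := by
    have := congrArg (aeval t) hfg
    simp only [hf, map_add, map_sub, map_mul, aeval_C, map_pow, aeval_X, hd] at this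
    linear_combination -this
  have hgn : g.natDegree ≤ n := by
    refine natDegree_add_le_of_degree_le ?_ (natDegree_C_mul_X_pow_le d n)
    simpa [hn] using f.eraseLead_natDegree_le
  have hgM : algebraMap A K (g.coeff i) ∈ N * (1 / N) := ih _ (Nat.lt_succ_of_le hgn) hg rfl
  rw [hfg, coeff_add, coeff_sub, coeff_C_mul_X_pow, coeff_C_mul_X_pow, map_add, map_sub]
  refine add_mem (sub_mem hgM ?_) ?_ <;> split_ifs <;> simp [hcM, hdM]

end InvertibleSubmodules

section DimensionOne

variable {R K : Type*} [CommRing R] [CommRing K] [Algebra R K]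

lemma not_isMaximal_map_C (I : Ideal R) : ¬ (I.map (C : R →+* R[X])).IsMaximal := by
  intro h
  have := (I.polynomialQuotientEquivQuotientPolynomial).toMulEquiv.isField
    ((Ideal.Quotient.maximal_ideal_iff_isField_quotient _).mp h)
  exact not_isField _ this

lemma exists_nonZeroDivisor_aeval_eq_zero [IsFractionRing R K] (t : K) :
    ∃ a, ∃ b ∈ R⁰, aeval t (C b * X - C a) = 0 := by
  obtain ⟨⟨a, b⟩, hab⟩ := IsLocalization.surj R⁰ t
  exact ⟨a, b, b.2, by
    rw [map_sub, map_mul, aeval_C, aeval_X, aeval_C, sub_eq_zero, mul_comm, hab]⟩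

lemma krullDimLE_one_range_aeval [IsNoetherianRing R] [Ring.KrullDimLE 1 R] [IsFractionRing R K]
    (t : K) : Ring.KrullDimLE 1 (aeval (R := R) t).range := by
  obtain ⟨a, b, hb, hab⟩ := exists_nonZeroDivisor_aeval_eq_zero (R := R) t
  have hreg : C b * X - C a ∈ R[X]⁰ := mem_nonzeroDivisors_of_coeff_mem 1 (by simpa)
  have hdim := ringKrullDim_succ_le_of_surjective (aeval (R := R) t).rangeRestrict.toRingHom
    (aeval t).rangeRestrict_surjective hreg (Subtype.ext hab)
  rw [ringKrullDim_of_isNoetherianRing, ENat.WithBot.add_le_add_one_right_iff] at hdim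
  exact Ring.krullDimLE_iff.mpr (hdim.trans (Ring.krullDimLE_iff.mp ‹_›))

-- Otherwise `p R[t]` is a nonmaximal prime of `R[t]`, since `R[t] / p R[t] = (R / p)[X]`. As
-- `dim R[t] ≤ 1` it is a minimal prime, yet it contains the denominator of `t`, which is regular.
lemma exists_aeval_eq_zero_coeff_notMem [IsNoetherianRing R] [Ring.KrullDimLE 1 R]
    [IsFractionRing R K] (t : K) (p : Ideal R) [p.IsPrime] :
    ∃ f : R[X], aeval t f = 0 ∧ ∃ i, f.coeff i ∉ p := by
  by_contra! hker
  obtain ⟨a, b, hb, hab⟩ := exists_nonZeroDivisor_aeval_eq_zero (R := R) t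
  have hbp : b ∈ p := by simpa using hker _ hab 1
  let φ := (aeval (R := R) t).rangeRestrict
  have hφ : Function.Surjective φ := (aeval t).rangeRestrict_surjective
  have hkerφ : RingHom.ker φ ≤ p.map C := fun f hf ↦
    Ideal.mem_map_C_iff.mpr (hker f (congrArg Subtype.val hf))
  have hprime : ((p.map C).map φ).IsPrime := Ideal.map_isPrime_of_surjective hφ hkerφ
  rcases Ring.krullDimLE_one_iff.mp (krullDimLE_one_range_aeval t) _ hprime with hmin | hmax
  · have hbP : φ (C b) ∈ (p.map C).map φ := Ideal.mem_map_of_mem _ (Ideal.mem_map_of_mem _ hbp)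
    have hbreg : φ (C b) ∈ (aeval (R := R) t).range⁰ :=
      mem_nonZeroDivisors_of_injective (f := (aeval (R := R) t).range.val) Subtype.val_injective
        (by simpa [φ] using (IsLocalization.map_units K ⟨b, hb⟩).mem_nonZeroDivisors)
    exact notMem_nonZeroDivisors_of_mem_mem_minimalPrimes hbP hmin hbreg
  · have hcomap : ((p.map C).map φ).comap φ = p.map C := by
      rw [Ideal.comap_map_of_surjective φ hφ]
      exact sup_eq_left.mpr hkerφ
    exact not_isMaximal_map_C p (hcomap ▸ Ideal.comap_isMaximal_of_surjective φ hφ)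

variable {A : Type*} [CommRing A] [Algebra R A] [Algebra A K] [IsScalarTower R A K]

variable (R) in
lemma isUnit_span_pair [IsNoetherianRing R] [Ring.KrullDimLE 1 R] [IsFractionRing R K]
    [IsIntegrallyClosedIn A K] (t : K) : IsUnit (span A {1, t}) := by
  let N := span A {1, t}
  let contents : Ideal R :=
    Ideal.comap (algebraMap R A) ((N * (1 / N)).comap (Algebra.linearMap A K))
  suffices contents = ⊤ from
    isUnit_of_one_mem_mul_one_div (by simpa [contents] using (Ideal.eq_top_iff_one _).mp this)
  by_contra hne
  obtain ⟨m, hm, hle⟩ := Ideal.exists_le_maximal _ hne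
  obtain ⟨f, hf, i, hi⟩ := exists_aeval_eq_zero_coeff_notMem t m
  have hfA : aeval t (f.map (algebraMap R A)) = 0 := by rwa [aeval_map_algebraMap]
  have hcoeff := coeff_mem_span_pair_mul_one_div hfA i
  rw [coeff_map] at hcoeff
  exact hi (hle hcoeff)

lemma isUnit_coeSubmodule_map [IsNoetherianRing R] [Ring.KrullDimLE 1 R] [IsFractionRing R K]
    [IsIntegrallyClosedIn A K] {I : Ideal R} (hI : ∃ b ∈ I, b ∈ R⁰) :
    IsUnit (IsLocalization.coeSubmodule K (I.map (algebraMap R A))) := by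
  obtain ⟨b, hbI, hb⟩ := hI
  have hfg : (I.map (algebraMap R A)).FG := Ideal.FG.map (IsNoetherian.noetherian I) _
  refine isUnit_of_fg_of_isUnit_mem (isUnit_span_pair R) (Submodule.FG.map _ hfg)
    (IsLocalization.map_units K ⟨b, hb⟩) ?_
  exact ⟨algebraMap R A b, Ideal.mem_map_of_mem _ hbI,
    (IsScalarTower.algebraMap_apply R A K b).symm⟩

end DimensionOne

section IdealIntegralClosure

variable {R : Type*} [CommRing R] {I : Ideal R} {x : R}

lemma exists_monic_of_mem_idealIntegralClosure (hx : x ∈ idealIntegralClosure I) :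
    ∃ p : R[X], p.Monic ∧ p.eval x = 0 ∧ ∀ i, p.coeff i ∈ I ^ (p.natDegree - i) := by
  obtain ⟨n, -, a, ha, hx⟩ := hx
  nontriviality R
  let r : R[X] := ∑ i ∈ Finset.Icc 1 n, C (a i) * X ^ (n - i)
  have hdeg : r.degree < n := by
    refine (degree_sum_le _ _).trans_lt ((Finset.sup_lt_iff (WithBot.bot_lt_coe n)).mpr ?_)
    intro i hi
    rw [Finset.mem_Icc] at hi
    refine (degree_C_mul_X_pow_le _ _).trans_lt ?_
    exact Nat.cast_lt.mpr (Nat.sub_lt_self hi.1 hi.2)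
  have hnat : (X ^ n + r).natDegree = n := by
    rw [natDegree_add_eq_left_of_degree_lt (by rwa [degree_X_pow]), natDegree_X_pow]
  refine ⟨X ^ n + r, monic_X_pow_add hdeg, by simpa [r, eval_finsetSum] using hx, fun j ↦ ?_⟩
  rw [hnat, coeff_add, coeff_X_pow, finsetSum_coeff]
  refine add_mem ?_ (sum_mem fun i hi ↦ ?_)
  · split_ifs with h <;> simp [h]
  · rw [coeff_C_mul_X_pow]
    split_ifs with h
    · rw [h, Nat.sub_sub_self (Finset.mem_Icc.mp hi).2]
      exact ha i hi
    · exact zero_mem _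

lemma mem_idealIntegralClosure_of_monic {p : R[X]} (hp : p.Monic) (hpx : p.eval x = 0)
    (hpI : ∀ i, p.coeff i ∈ I ^ (p.natDegree - i)) : x ∈ idealIntegralClosure I := by
  obtain _ | _ := subsingleton_or_nontrivial R
  · exact ⟨1, one_pos, 0, by simp, Subsingleton.elim _ _⟩
  have hpos : 0 < p.natDegree := by
    refine Nat.pos_of_ne_zero fun h ↦ ?_
    simp [hp.natDegree_eq_zero.mp h] at hpx
  refine ⟨p.natDegree, hpos, fun i ↦ p.coeff (p.natDegree - i), fun i hi ↦ ?_, ?_⟩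
  · simpa [Nat.sub_sub_self (Finset.mem_Icc.mp hi).2] using hpI (p.natDegree - i)
  · rw [← hpx, eval_eq_sum_range, ← Finset.sum_flip, Finset.range_eq_Ico,
      Finset.sum_eq_sum_Ico_succ_bot (Nat.succ_pos _), Nat.succ_eq_add_one,
      Finset.Ico_add_one_right_eq_Icc]
    simp [hp.coeff_natDegree]

variable {A K : Type*} [CommRing A] [CommRing K] [Algebra R K] [Algebra R A] [Algebra A K]
  [IsScalarTower R A K]

lemma isIntegral_pow_mul_of_mem_pow {q : K} (hq : ∀ a ∈ I, IsIntegral A (q * algebraMap R K a))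
    {n : ℕ} {c : R} (hc : c ∈ I ^ n) : IsIntegral A (q ^ n * algebraMap R K c) := by
  induction n generalizing c with
  | zero => simpa [IsScalarTower.algebraMap_apply R A K] using isIntegral_algebraMap
  | succ n ih =>
    rw [pow_succ] at hc
    induction hc using Submodule.mul_induction_on' with
    | mem_mul_mem c hc a ha =>
      convert! (ih hc).mul (hq a ha) using 1
      rw [map_mul]
      ring
    | add c _ d _ hc hd => simpa only [map_add, mul_add] using hc.add hd

lemma isIntegral_mul_of_mem_idealIntegralClosure (hx : x ∈ idealIntegralClosure I) {q : K}
    (hq : ∀ a ∈ I, IsIntegral A (q * algebraMap R K a)) :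
    IsIntegral A (q * algebraMap R K x) := by
  obtain ⟨p, hp, hpx, hpI⟩ := exists_monic_of_mem_idealIntegralClosure hx
  nontriviality K
  let P : K[X] := (p.map (algebraMap R K)).scaleRoots q
  have hP : P.Monic := (monic_scaleRoots_iff q).mpr (hp.map _)
  have hPx : P.eval (q * algebraMap R K x) = 0 := by
    rw [scaleRoots_eval_mul, eval_map, eval₂_at_apply, hpx, map_zero, mul_zero]
  have hdeg : P.natDegree ≠ 0 := fun h ↦ by simp [hP.natDegree_eq_zero.mp h] at hPx
  refine .of_aeval_monic_of_isIntegral_coeff hP hdeg (hPx ▸ isIntegral_zero) fun i ↦ ?_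
  rw [coeff_scaleRoots, coeff_map, hp.natDegree_map, mul_comm]
  exact isIntegral_pow_mul_of_mem_pow hq (hpI i)

lemma algebraMap_mem_map_of_mem_idealIntegralClosure [IsIntegrallyClosedIn A K]
    (hI : IsUnit (IsLocalization.coeSubmodule K (I.map (algebraMap R A))))
    (hx : x ∈ idealIntegralClosure I) : algebraMap R A x ∈ I.map (algebraMap R A) := by
  obtain ⟨L, hL⟩ := hI.exists_left_inv
  set H := IsLocalization.coeSubmodule K (I.map (algebraMap R A))
  have hIH : ∀ a ∈ I, algebraMap R K a ∈ H := fun a ha ↦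
    ⟨algebraMap R A a, Ideal.mem_map_of_mem _ ha, (IsScalarTower.algebraMap_apply R A K a).symm⟩
  have hLx : L * span A {algebraMap R K x} ≤ 1 := by
    refine mul_le.mpr fun q hq y hy ↦ ?_
    obtain ⟨r, rfl⟩ := mem_span_singleton.mp hy
    rw [mul_smul_comm]
    refine smul_mem _ r (mem_one.mpr (IsIntegrallyClosedIn.isIntegral_iff.mp ?_))
    refine isIntegral_mul_of_mem_idealIntegralClosure hx fun a ha ↦ ?_
    exact IsIntegrallyClosedIn.isIntegral_iff.mpr (mem_one.mp (hL ▸ mul_mem_mul hq (hIH a ha)))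
  have hxH : span A {algebraMap R K x} ≤ H :=
    calc span A {algebraMap R K x} = H * (L * span A {algebraMap R K x}) := by
          rw [← mul_assoc, mul_comm H, hL, one_mul]
      _ ≤ H * 1 := by gcongr
      _ = H := mul_one H
  obtain ⟨y, hy, hyx⟩ := hxH (mem_span_singleton_self _)
  rw [IsScalarTower.algebraMap_apply R A K] at hyx
  rwa [← IsIntegralClosure.algebraMap_injective A A K hyx]

lemma mem_idealIntegralClosure_of_algebraMap_mem_map [Algebra.IsIntegral R A]
    (hinj : Function.Injective (algebraMap R A))
    (hx : algebraMap R A x ∈ I.map (algebraMap R A)) : x ∈ idealIntegralClosure I := by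
  obtain ⟨p, hp, hpx, hpI⟩ := exists_monic_aeval_eq_zero_forall_mem_pow_of_mem_map hx
  rw [aeval_algebraMap_apply, map_eq_zero_iff _ hinj] at hpx
  exact mem_idealIntegralClosure_of_monic hp hpx hpI

lemma map_linearMap_mul_toSubmodule (I : Ideal R) (B : Subalgebra R K) :
    Submodule.map (Algebra.linearMap R K) I * Subalgebra.toSubmodule B =
      ((I.map (algebraMap R B)).restrictScalars R).map B.val.toLinearMap :=
  have hrange : (⊤ : Submodule R B).map B.val.toLinearMap = Subalgebra.toSubmodule B := by
    rw [Submodule.map_top]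
    exact B.toSubmodule.range_subtype
  calc Submodule.map (Algebra.linearMap R K) I * Subalgebra.toSubmodule B
      = I • Subalgebra.toSubmodule B := (Algebra.smul_def I _).symm
    _ = (I • (⊤ : Submodule R B)).map B.val.toLinearMap := by rw [Submodule.map_smul'', hrange]
    _ = ((I.map (algebraMap R B)).restrictScalars R).map B.val.toLinearMap := by
      rw [Ideal.smul_top_eq_map]

lemma algebraMap_mem_map_mul_toSubmodule_iff {B : Subalgebra R K} :
    algebraMap R K x ∈ Submodule.map (Algebra.linearMap R K) I * Subalgebra.toSubmodule B ↔
      algebraMap R B x ∈ I.map (algebraMap R B) := by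
  rw [map_linearMap_mul_toSubmodule]
  constructor
  · rintro ⟨y, hy, hyx⟩
    rwa [← (Subtype.ext hyx : y = algebraMap R B x)]
  · exact fun h ↦ ⟨_, h, rfl⟩

end IdealIntegralClosure

theorem idealIntegralClosure_eq_inter_general {R K : Type*} [CommRing R] [IsNoetherianRing R]
    [Ring.KrullDimLE 1 R] [CommRing K] [Algebra R K] [IsFractionRing R K] (I : Ideal R)
    (hreg : ∃ x ∈ I, x ∈ R⁰) :
    idealIntegralClosure I =
      algebraMap R K ⁻¹' (Submodule.map (Algebra.linearMap R K) I *
        Subalgebra.toSubmodule (integralClosure R K) : Submodule R K) ∧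
    (Submodule.map (Algebra.linearMap R K) I * Subalgebra.toSubmodule (integralClosure R K) =
        Submodule.map (Algebra.linearMap R K) I →
      idealIntegralClosure I = (I : Set R)) := by
  have hinj : Function.Injective (algebraMap R K) := IsFractionRing.injective R K
  have hclosure : idealIntegralClosure I = algebraMap R K ⁻¹' (Submodule.map
      (Algebra.linearMap R K) I * Subalgebra.toSubmodule (integralClosure R K) :) := by
    ext x
    rw [Set.mem_preimage, SetLike.mem_coe, algebraMap_mem_map_mul_toSubmodule_iff]
    exact ⟨algebraMap_mem_map_of_mem_idealIntegralClosure (K := K)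
        (isUnit_coeSubmodule_map hreg),
      mem_idealIntegralClosure_of_algebraMap_mem_map (.of_comp (f := Subtype.val) hinj)⟩
  refine ⟨hclosure, fun hI ↦ ?_⟩
  rw [hclosure, hI, Submodule.map_coe]
  exact Set.preimage_image_eq _ hinj

set_option synthInstance.maxHeartbeats 800000 in
/-- Let `R` be an analytically unramified one-dimensional Cohen–Macaulay
local ring with infinite residue field, and `I` a regular ideal.  Then the integral closure
of `I` satisfies `Ī = I·R̄ ∩ R` (computed in the total quotient ring `Q`), where `R̄` is the
integral closure of `R` in `Q`.  In particular, any regular ideal that is also an ideal of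
`R̄` (i.e. `I·R̄ = I·R` inside `Q`) is integrally closed. -/
theorem idealIntegralClosure_eq_inter
    (R : Type*) [CommRing R] [IsNoetherianRing R] [IsLocalRing R]
    (hur : IsReduced (AdicCompletion (maximalIdeal R) R))
    (hdim : ringKrullDim R = 1) (hCM : IsCohenMacaulayLocalRing R)
    (hk : Infinite (ResidueField R))
    (I : Ideal R) (hreg : ∃ x ∈ I, x ∈ nonZeroDivisors R) :
    idealIntegralClosure I =
      algebraMap R (FractionRing R) ⁻¹'
        ((Submodule.map (Algebra.linearMap R (FractionRing R)) I *
            Subalgebra.toSubmodule (integralClosure R (FractionRing R)) :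
          Submodule R (FractionRing R)) : Set (FractionRing R)) ∧
    ((Submodule.map (Algebra.linearMap R (FractionRing R)) I *
          Subalgebra.toSubmodule (integralClosure R (FractionRing R)) =
        Submodule.map (Algebra.linearMap R (FractionRing R)) I) →
      idealIntegralClosure I = (I : Set R)) := by
  have : Ring.KrullDimLE 1 R := Ring.krullDimLE_iff.mpr hdim.le
  exact idealIntegralClosure_eq_inter_general I hreg
end

section
/- Let R be an analytically unramified one-dimensional Cohen–Macaulay local ring with conductor ideal C = R : \bar{R} and infinite residue field. Then every integrally closed ideal of R containing C is a reflexive trace ideal. -/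
open IsLocalRing

/-!
Suppose first that the integral closure `R̄` is finite over `R`. Then the conductor `C` is a
finitely generated ideal of `R̄` containing a nonzerodivisor, so every element of `R : C` is
integral. For an integrally closed ideal `I ⊇ C` this gives `R : I ⊆ R̄`, hence
`(R : I) I ⊆ I R̄ ∩ R = I`, and `I` is a trace ideal. Reflexivity also comes from `I R̄ ∩ R = I`:
as `R̄ C = C`, an element of `R : (R : I)` lies in `R̄ : (R̄ : I R̄)`, which is `I R̄` since `I R̄`
is invertible in the one-dimensional integrally closed ring `R̄`.

For the finiteness of `R̄`, let `x` be a nonzerodivisor in the maximal ideal and let `T` be the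
integral closure of the completion `R̂` in `R̂[1/x]`, a reduced Artinian ring. A nonzero element of
`⋂ xⁿ T` would produce an idempotent `e ≠ 0` with `e / x` integral over `R̂`, contradicting
`⋂ xⁿ R̂ = 0`. The ideals `xⁿ T ∩ R̂` stabilise modulo `x`, which gives
`x^N T ⊆ R̂ + x^(N+1) T` for some `N`, and then `x^N T ⊆ R̂` by completeness. By faithful flatness,
`x^N R̄ ⊆ R`.
-/

open nonZeroDivisors IsLocalization

section ColonSubmodules

variable {R A : Type*} [CommRing R] [CommRing A] [Algebra R A]

theorem isIntegral_of_mem_div_self {P : Submodule R A} (hP : P.FG) {u w : A} (huP : u ∈ P)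
    (hu : u ∈ A⁰) (hw : w ∈ P / P) : IsIntegral R w := by
  have : Module.Finite R P := Module.Finite.iff_fg.mpr hP
  let f : Module.End R P := (LinearMap.mulLeft R w).restrict hw
  obtain ⟨p, hp, hpf⟩ := (Module.End.isIntegral (R := R) (M := P)).isIntegral f
  have hpow (n : ℕ) (v : P) : ((f ^ n) v : A) = w ^ n * v := by
    induction n with
    | zero => simp
    | succ n ih => rw [pow_succ', Module.End.mul_apply, pow_succ', mul_assoc, ← ih]; rfl
  have hval (v : P) : (Polynomial.aeval f p v : A) = Polynomial.aeval w p * v := by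
    simp [Polynomial.aeval_eq_sum_range, hpow, Finset.sum_mul]
  refine ⟨p, hp, (mem_nonZeroDivisors_iff.mp hu).2 _ ?_⟩
  rw [← Polynomial.aeval_def] at hpf ⊢
  rw [← hval ⟨u, huP⟩, hpf, LinearMap.zero_apply, ZeroMemClass.coe_zero]

variable (R A) in
theorem fg_one : (1 : Submodule R A).FG :=
  Submodule.one_eq_span (R := R) (A := A) ▸ Submodule.fg_span_singleton 1

theorem fg_one_div [IsNoetherianRing R] {P : Submodule R A} {u : A} (huP : u ∈ P) (hu : u ∈ A⁰) :
    (1 / P).FG := by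
  refine Submodule.fg_of_fg_map_injective (LinearMap.mulLeft R u)
    (fun _ _ h ↦ (mul_cancel_left_mem_nonZeroDivisors hu).mp h) ?_
  refine (fg_one R A).of_le ?_
  rintro _ ⟨w, hw, rfl⟩
  rw [LinearMap.mulLeft_apply, mul_comm]
  exact hw u huP

theorem coeSubmodule_le_one (I : Ideal R) : coeSubmodule A I ≤ 1 :=
  coeSubmodule_top (R := R) A ▸ coeSubmodule_mono A le_top

theorem one_div_anti {P Q : Submodule R A} (h : P ≤ Q) : 1 / Q ≤ 1 / P :=
  fun _ hw y hy ↦ hw y (h hy)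

theorem one_div_one_div_le_of_mul_one_div_eq_one {P : Submodule R A} (hP : P * (1 / P) = 1) :
    1 / (1 / P) ≤ P :=
  calc
    1 / (1 / P) = 1 / P * (1 / (1 / P)) * P := by rw [mul_right_comm, mul_comm (1 / P), hP, one_mul]
    _ ≤ 1 * P := mul_le_mul_left Submodule.mul_one_div_le_one P
    _ = P := one_mul P

theorem one_div_one_div_le_div_self (S : Subalgebra R A) :
    1 / (1 / S.toSubmodule) ≤ (1 / S.toSubmodule) / (1 / S.toSubmodule) := by
  intro w hw c hc s hs
  rw [mul_assoc]
  refine hw _ fun t ht ↦ ?_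
  rw [mul_assoc]
  exact hc _ (S.mul_mem hs ht)

theorem isIntegral_of_mem_one_div_one_div [IsNoetherianRing R] {S : Subalgebra R A} {u w : A}
    (huS : u ∈ 1 / S.toSubmodule) (hu : u ∈ A⁰) (hw : w ∈ 1 / (1 / S.toSubmodule)) :
    IsIntegral R w :=
  isIntegral_of_mem_div_self (fg_one_div S.one_mem (one_mem _)) huS hu
    (one_div_one_div_le_div_self S hw)

end ColonSubmodules

section DimensionOne

variable {S : Type*} [CommRing S]

theorem isMaximal_of_mem_nonZeroDivisors [Ring.KrullDimLE 1 S] {p : Ideal S} [hp : p.IsPrime]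
    {d : S} (hd : d ∈ S⁰) (hdp : d ∈ p) : p.IsMaximal :=
  ((Ring.krullDimLE_one_iff.mp ‹_› p hp).resolve_left fun hmin ↦
    notMem_nonZeroDivisors_of_mem_mem_minimalPrimes hdp hmin hd)

theorem krullDimLE_of_isIntegral (R : Type*) [CommRing R] [Algebra R S] [Algebra.IsIntegral R S]
    (n : ℕ) [Ring.KrullDimLE n R] : Ring.KrullDimLE n S := by
  rw [Ring.krullDimLE_iff] at *
  refine le_trans ?_ ‹ringKrullDim R ≤ n›
  refine Order.krullDim_le_of_strictMono (PrimeSpectrum.comap (algebraMap R S)) fun p q hpq ↦ ?_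
  exact Ideal.IsIntegral.comap_lt_comap hpq

theorem exists_forall_dvd_mul_of_mem_minimalPrimes [IsNoetherianRing S] {d : S} {p : Ideal S}
    (hp : p ∈ (Ideal.span {d}).minimalPrimes) : ∃ z : S, (∀ b ∈ p, d ∣ b * z) ∧ ¬ d ∣ z := by
  have hprime : p.IsPrime := hp.1.1
  rw [← Ideal.annihilator_quotient (I := Ideal.span {d})] at hp
  obtain ⟨_, z, hz⟩ := isAssociatedPrime_iff.mp
    (Module.associatedPrimes.minimalPrimes_annihilator_subset_associatedPrimes _ _ hp)
  obtain ⟨z, rfl⟩ := Ideal.Quotient.mk_surjective z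
  have hmem (b : S) : b ∈ p ↔ d ∣ b * z := by
    rw [hz, Submodule.mem_colon_singleton, Submodule.mem_bot, ← Ideal.mem_span_singleton,
      ← Ideal.Quotient.eq_zero_iff_mem]
    rfl
  refine ⟨z, fun b ↦ (hmem b).mp, fun hdvd ↦ hprime.ne_top ?_⟩
  rwa [Ideal.eq_top_iff_one, hmem, one_mul]

theorem mem_minimalPrimes_span_singleton [Ring.KrullDimLE 1 S] {n : Ideal S} [hn : n.IsMaximal]
    {d : S} (hd : d ∈ S⁰) (hdn : d ∈ n) : n ∈ (Ideal.span {d}).minimalPrimes := by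
  refine ⟨⟨hn.isPrime, (Ideal.span_singleton_le_iff_mem n).mpr hdn⟩, ?_⟩
  rintro q ⟨hq, hdq⟩ hqn
  have : q.IsMaximal :=
    isMaximal_of_mem_nonZeroDivisors hd (hdq (Ideal.mem_span_singleton_self d))
  exact (this.eq_of_le hn.ne_top hqn).ge

theorem coeSubmodule_mul_one_div_eq_one (K : Type*) [CommRing K] [Algebra S K] [IsNoetherianRing S]
    [Ring.KrullDimLE 1 S] [IsIntegrallyClosedIn S K] {I : Ideal S} {d : S} (hdI : d ∈ I)
    (hd : IsUnit (algebraMap S K d)) : coeSubmodule K I * (1 / coeSubmodule K I) = 1 := by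
  have hinj : Function.Injective (algebraMap S K) :=
    IsIntegralClosure.algebraMap_injective S S K
  have hdS : d ∈ S⁰ := mem_nonZeroDivisors_of_injective hinj hd.mem_nonZeroDivisors
  by_contra hne
  let J : Ideal S := (coeSubmodule K I * (1 / coeSubmodule K I)).comap (Algebra.linearMap S K)
  have hJ : J ≠ ⊤ := fun htop ↦ hne <| le_antisymm Submodule.mul_one_div_le_one <|
    Submodule.one_le.mpr <| by simpa [J] using (Ideal.eq_top_iff_one J).mp htop
  obtain ⟨n, hn, hJn⟩ := Ideal.exists_le_maximal J hJ
  have hdJ : d ∈ J := Submodule.le_self_mul_one_div (coeSubmodule_le_one I) ⟨d, hdI, rfl⟩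
  obtain ⟨z, hz, hdz⟩ :=
    exists_forall_dvd_mul_of_mem_minimalPrimes (mem_minimalPrimes_span_singleton hdS (hJn hdJ))
  obtain ⟨w, hw⟩ : ∃ w : K, algebraMap S K d * w = algebraMap S K z :=
    (hd.dvd : algebraMap S K d ∣ algebraMap S K z).imp fun _ ↦ Eq.symm
  have hwmem : w ∈ (1 / coeSubmodule K I) / (1 / coeSubmodule K I) := by
    intro v hv y hy
    have hvy : y * v ∈ coeSubmodule K I * (1 / coeSubmodule K I) := Submodule.mul_mem_mul hy hv
    obtain ⟨a, ha⟩ := Submodule.mem_one.mp (Submodule.mul_one_div_le_one hvy)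
    obtain ⟨c, hc⟩ := hz a (hJn (show algebraMap S K a ∈ _ from ha ▸ hvy))
    refine Submodule.mem_one.mpr ⟨c, hd.mul_left_cancel ?_⟩
    rw [← map_mul, ← hc, map_mul, ha, ← hw]
    ring
  have hint : IsIntegral S w := isIntegral_of_mem_div_self
    (fg_one_div (Submodule.mem_map_of_mem hdI) hd.mem_nonZeroDivisors)
    (Submodule.one_mem_div.mpr (coeSubmodule_le_one I)) (one_mem _) hwmem
  obtain ⟨b, rfl⟩ := IsIntegrallyClosedIn.algebraMap_eq_of_integral hint
  exact hdz ⟨b, hinj (by rw [map_mul, hw])⟩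

end DimensionOne

section IntegralClosureOfIdeals

variable {R : Type*} [CommRing R]

theorem mem_idealIntegralClosure_of_monic_s5 {I : Ideal R} {p : Polynomial R} (hp : p.Monic)
    (hcoeff : ∀ k, p.coeff k ∈ I ^ (p.natDegree - k)) {r : R} (hr : p.eval r = 0) :
    r ∈ idealIntegralClosure I := by
  rcases subsingleton_or_nontrivial R with _ | _
  · exact ⟨1, one_pos, 0, fun _ _ ↦ Submodule.zero_mem _, Subsingleton.elim _ _⟩
  have hdeg : 0 < p.natDegree := by
    refine Nat.pos_of_ne_zero fun h0 ↦ one_ne_zero (α := R) ?_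
    rwa [hp.natDegree_eq_zero.mp h0, Polynomial.eval_one] at hr
  refine ⟨p.natDegree, hdeg, fun i ↦ p.coeff (p.natDegree - i), fun i hi ↦ ?_, ?_⟩
  · simpa only [Nat.sub_sub_self (Finset.mem_Icc.mp hi).2] using hcoeff (p.natDegree - i)
  · rw [← hr, Polynomial.eval_eq_sum_range, Finset.sum_range_succ, add_comm, hp.coeff_natDegree,
      one_mul]
    have hreflect := Finset.sum_Ico_reflect (fun i ↦ p.coeff i * r ^ i) 1 le_rfl (n := p.natDegree)
    rw [Nat.sub_self, Nat.add_sub_cancel, ← Finset.range_eq_Ico,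
      Finset.Ico_add_one_right_eq_Icc] at hreflect
    exact congrArg (· + _) hreflect

theorem mem_idealIntegralClosure_of_algebraMap_mem_map_s5 {B : Type*} [CommRing B] [Algebra R B]
    [Module.Finite R B] (hinj : Function.Injective (algebraMap R B)) {I : Ideal R} {r : R}
    (hr : algebraMap R B r ∈ I.map (algebraMap R B)) : r ∈ idealIntegralClosure I := by
  have hrange : LinearMap.range (algebraMap R (Module.End R B) r) ≤ I • ⊤ := by
    rw [Ideal.smul_top_eq_map]
    rintro _ ⟨b, rfl⟩
    rw [Module.algebraMap_end_apply, Algebra.smul_def]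
    exact Ideal.mul_mem_right _ _ hr
  obtain ⟨p, hp, -, hcoeff, hroot⟩ :=
    LinearMap.exists_monic_and_natDegree_eq_and_coeff_mem_pow_and_aeval_eq_zero R _ I hrange
  refine mem_idealIntegralClosure_of_monic_s5 hp hcoeff (hinj ?_)
  rw [Polynomial.aeval_algebraMap_apply] at hroot
  simpa [Algebra.smul_def] using LinearMap.congr_fun hroot (1 : B)

end IntegralClosureOfIdeals

section Conductor

variable {R : Type*} [CommRing R]

theorem coeSubmodule_conductorIdeal : coeSubmodule (FractionRing R) (conductorIdeal R) =
    1 / (integralClosure R (FractionRing R)).toSubmodule := by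
  ext w
  rw [mem_coeSubmodule]
  refine ⟨?_, fun hw ↦ ?_⟩
  · rintro ⟨c, hc, rfl⟩ t ht
    rw [← Algebra.smul_def]
    exact Submodule.mem_colon.mp hc t ht
  · obtain ⟨c, rfl⟩ := Submodule.mem_one.mp (mul_one w ▸ hw 1 (Subalgebra.one_mem _))
    refine ⟨c, Submodule.mem_colon.mpr fun t ht ↦ ?_, rfl⟩
    rw [Algebra.smul_def]
    exact hw t ht

theorem exists_mem_conductorIdeal_mem_nonZeroDivisors
    [Module.Finite R (integralClosure R (FractionRing R))] : ∃ d ∈ conductorIdeal R, d ∈ R⁰ := by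
  have hfg : (integralClosure R (FractionRing R)).toSubmodule.FG := Module.Finite.iff_fg.mp ‹_›
  obtain ⟨d, hd, hint⟩ := FractionalIdeal.isFractional_of_fg (S := R⁰) hfg
  exact ⟨d, Submodule.mem_colon.mpr fun t ht ↦ Submodule.mem_one.mpr (hint t ht), hd⟩

theorem isIntegral_of_mem_one_div_conductorIdeal [IsNoetherianRing R]
    [Module.Finite R (integralClosure R (FractionRing R))] {w : FractionRing R}
    (hw : w ∈ 1 / coeSubmodule (FractionRing R) (conductorIdeal R)) : IsIntegral R w := by
  obtain ⟨d, hdC, hd⟩ := exists_mem_conductorIdeal_mem_nonZeroDivisors (R := R)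
  rw [coeSubmodule_conductorIdeal] at hw
  refine isIntegral_of_mem_one_div_one_div (u := algebraMap R _ d) ?_
    (map_units (FractionRing R) ⟨d, hd⟩).mem_nonZeroDivisors hw
  rw [← coeSubmodule_conductorIdeal]
  exact Submodule.mem_map_of_mem hdC

end Conductor

section DualsOfIdeals

variable {R : Type*} [CommRing R] {I : Ideal R}

theorem mul_linearMap_comm (f : I →ₗ[R] R) (i j : I) : (i : R) * f j = j * f i := by
  rw [← smul_eq_mul, ← map_smul, ← smul_eq_mul, ← map_smul]
  exact congrArg f (Subtype.ext (mul_comm _ _))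

variable (K : Type*) [CommRing K] [Algebra R K] [IsFractionRing R K]

theorem exists_mem_one_div_forall_mul_eq {d : R} (hdI : d ∈ I) (hd : d ∈ R⁰) (f : I →ₗ[R] R) :
    ∃ w ∈ 1 / coeSubmodule K I, ∀ i : I, w * algebraMap R K i = algebraMap R K (f i) := by
  have hunit : IsUnit (algebraMap R K d) := map_units K ⟨d, hd⟩
  obtain ⟨w, hw⟩ : algebraMap R K d ∣ algebraMap R K (f ⟨d, hdI⟩) := hunit.dvd
  have hmul (i : I) : w * algebraMap R K i = algebraMap R K (f i) := by
    apply hunit.mul_left_cancel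
    rw [← mul_assoc, ← hw, ← map_mul, ← map_mul, mul_comm]
    exact congrArg _ (mul_linearMap_comm f i ⟨d, hdI⟩)
  refine ⟨w, ?_, hmul⟩
  rintro _ ⟨i, hi, rfl⟩
  exact Submodule.mem_one.mpr ⟨_, (hmul ⟨i, hi⟩).symm⟩

variable {K}

theorem exists_linearMap_of_mem_one_div {w : K} (hw : w ∈ 1 / coeSubmodule K I) :
    ∃ f : I →ₗ[R] R, ∀ i : I, algebraMap R K (f i) = w * algebraMap R K i := by
  let e := LinearEquiv.ofInjective (Algebra.linearMap R K) (IsFractionRing.injective R K)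
  let g : I →ₗ[R] LinearMap.range (Algebra.linearMap R K) :=
    (LinearMap.mulLeft R w ∘ₗ Algebra.linearMap R K ∘ₗ I.subtype).codRestrict _ fun i ↦
      Submodule.mem_one.mp (hw _ (Submodule.mem_map_of_mem i.2))
  exact ⟨e.symm ∘ₗ g, fun i ↦ congrArg Subtype.val (e.apply_symm_apply (g i))⟩

theorem mul_dual_apply_eq {d : R} (hdI : d ∈ I) (φ : Module.Dual R (Module.Dual R I))
    (f : Module.Dual R I) : d * φ f = f ⟨d, hdI⟩ * φ I.subtype := by
  have hf : d • f = f ⟨d, hdI⟩ • I.subtype := by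
    ext i
    exact (mul_linearMap_comm f ⟨d, hdI⟩ i).trans (mul_comm _ _)
  simpa only [map_smul, smul_eq_mul] using congrArg φ hf

theorem isReflexive_of_one_div_one_div_le {d : R} (hdI : d ∈ I) (hd : d ∈ R⁰)
    (hI : 1 / (1 / coeSubmodule K I) ≤ coeSubmodule K I) : Module.IsReflexive R I := by
  refine ⟨fun i j hij ↦ Subtype.ext (LinearMap.congr_fun hij I.subtype), fun φ ↦ ?_⟩
  have hφ : φ I.subtype ∈ I := by
    have hmem : algebraMap R K (φ I.subtype) ∈ 1 / (1 / coeSubmodule K I) := by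
      intro w hw
      obtain ⟨f, hf⟩ := exists_linearMap_of_mem_one_div hw
      refine Submodule.mem_one.mpr ⟨φ f, (map_units K ⟨d, hd⟩).mul_left_cancel ?_⟩
      rw [← map_mul, mul_dual_apply_eq hdI, map_mul, hf]
      ring
    obtain ⟨i, hi, hiφ⟩ := hI hmem
    exact IsFractionRing.injective R K hiφ ▸ hi
  refine ⟨⟨φ I.subtype, hφ⟩, LinearMap.ext fun f ↦ ?_⟩
  rw [Module.Dual.eval_apply, ← mul_cancel_left_mem_nonZeroDivisors hd, mul_dual_apply_eq hdI]
  exact (mul_linearMap_comm f ⟨d, hdI⟩ ⟨_, hφ⟩).trans (mul_comm _ _)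

theorem traceIdeal_eq_self_of_one_div_le {d : R} (hdI : d ∈ I) (hd : d ∈ R⁰)
    (hI : 1 / coeSubmodule K I ≤ coeSubmodule K I / coeSubmodule K I) : traceIdeal R I = I := by
  refine le_antisymm (iSup_le ?_) fun i hi ↦ Ideal.mem_iSup_of_mem I.subtype ⟨⟨i, hi⟩, rfl⟩
  rintro f _ ⟨i, rfl⟩
  obtain ⟨w, hw, hwf⟩ := exists_mem_one_div_forall_mul_eq K hdI hd f
  obtain ⟨j, hj, hji⟩ := hI hw _ (Submodule.mem_map_of_mem i.2)
  exact IsFractionRing.injective R K (hji.trans (hwf i)) ▸ hj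

end DualsOfIdeals

section IdealsContainingConductor

variable {R : Type*} [CommRing R] [Module.Finite R (integralClosure R (FractionRing R))]
  {I : Ideal R}

local notation "K" => FractionRing R
local notation "R̄" => integralClosure R (FractionRing R)

theorem mem_of_algebraMap_mem_map_integralClosure (hic : idealIntegralClosure I = I) {r : R}
    (hr : algebraMap R R̄ r ∈ I.map (algebraMap R R̄)) : r ∈ I := by
  rw [← SetLike.mem_coe, ← hic]
  exact mem_idealIntegralClosure_of_algebraMap_mem_map_s5 (fun a b hab ↦
    IsFractionRing.injective R K (congrArg Subtype.val hab)) hr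

variable [IsNoetherianRing R]

theorem one_div_le_div_self_of_conductorIdeal_le (hic : idealIntegralClosure I = I)
    (hC : conductorIdeal R ≤ I) :
    1 / coeSubmodule K I ≤ coeSubmodule K I / coeSubmodule K I := by
  rintro w hw _ ⟨i, hi, rfl⟩
  have hint : IsIntegral R w :=
    isIntegral_of_mem_one_div_conductorIdeal (one_div_anti (coeSubmodule_mono K hC) hw)
  obtain ⟨r, hr⟩ := Submodule.mem_one.mp (hw _ (Submodule.mem_map_of_mem hi))
  refine ⟨r, mem_of_algebraMap_mem_map_integralClosure hic ?_, hr⟩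
  have hrw : algebraMap R R̄ r = ⟨w, hint⟩ * algebraMap R R̄ i := Subtype.ext hr
  exact hrw ▸ Ideal.mul_mem_left _ _ (Ideal.mem_map_of_mem _ hi)

theorem algebraMap_mem_one_div_one_div_map {r : R}
    (hr : algebraMap R K r ∈ 1 / (1 / coeSubmodule K I)) :
    algebraMap R K r ∈ 1 / (1 / coeSubmodule K (I.map (algebraMap R R̄))) := by
  intro v hv
  suffices IsIntegral R (algebraMap R K r * v) from Submodule.mem_one.mpr ⟨⟨_, this⟩, rfl⟩
  refine isIntegral_of_mem_one_div_conductorIdeal fun c hc ↦ ?_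
  rw [mul_assoc]
  refine hr _ ?_
  rintro _ ⟨i, hi, rfl⟩
  obtain ⟨b, hb⟩ := Submodule.mem_one.mp
    (hv _ (Submodule.mem_map_of_mem (Ideal.mem_map_of_mem (algebraMap R R̄) hi)))
  rw [coeSubmodule_conductorIdeal] at hc
  have hcb : c * b ∈ (1 : Submodule R K) := hc _ b.2
  rwa [show (b : K) = v * algebraMap R K i from hb, mul_left_comm, ← mul_assoc] at hcb

theorem one_div_one_div_le_self_of_idealIntegralClosure_eq [Ring.KrullDimLE 1 R]
    (hic : idealIntegralClosure I = I) {d : R} (hdI : d ∈ I) (hd : d ∈ R⁰) :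
    1 / (1 / coeSubmodule K I) ≤ coeSubmodule K I := by
  have : IsNoetherianRing R̄ := IsNoetherianRing.of_finite R R̄
  have : Ring.KrullDimLE 1 R̄ := krullDimLE_of_isIntegral R 1
  intro w hw
  have hone : (1 : K) ∈ 1 / coeSubmodule K I :=
    Submodule.one_mem_div.mpr (coeSubmodule_le_one I)
  obtain ⟨r, rfl⟩ := Submodule.mem_one.mp (mul_one w ▸ hw 1 hone)
  have hinv := coeSubmodule_mul_one_div_eq_one K
    (Ideal.mem_map_of_mem (algebraMap R R̄) hdI) (map_units K ⟨d, hd⟩)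
  obtain ⟨b, hb, hbr⟩ := one_div_one_div_le_of_mul_one_div_eq_one hinv
    (algebraMap_mem_one_div_one_div_map hw)
  have hbr' : b = algebraMap R R̄ r := Subtype.ext hbr
  exact ⟨r, mem_of_algebraMap_mem_map_integralClosure hic (hbr' ▸ hb), rfl⟩

end IdealsContainingConductor

section AdicallyComplete

theorem isAdicComplete_of_pow_le {R M : Type*} [CommRing R] [AddCommGroup M] [Module R M]
    {I J : Ideal R} [IsAdicComplete I M] {N : ℕ} (hJI : J ≤ I) (hIJ : I ^ N ≤ J) :
    IsAdicComplete J M where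
  haus' z hz := IsHausdorff.haus (I := I) inferInstance z fun n ↦
    (hz n).mono (Submodule.smul_mono_left (Ideal.pow_right_mono hJI n))
  prec' f hf := by
    obtain ⟨L, hL⟩ := IsPrecomplete.prec (I := I) inferInstance (f := f) fun hmn ↦
      (hf hmn).mono (Submodule.smul_mono_left (Ideal.pow_right_mono hJI _))
    refine ⟨L, fun n ↦ (hf (Nat.le_add_right n (N * n))).trans <|
      (hL (n + N * n)).mono (Submodule.smul_mono_left ?_)⟩
    calc
      I ^ (n + N * n) ≤ (I ^ N) ^ n := by
        rw [← pow_mul]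
        exact Ideal.pow_le_pow_right (Nat.le_add_left _ _)
      _ ≤ J ^ n := Ideal.pow_right_mono hIJ n

variable {S : Type*} [CommRing S] {I : Ideal S}

theorem isPrecomplete_pi {ι : Type*} [Finite ι] {M : ι → Type*}
    [∀ i, AddCommGroup (M i)] [∀ i, Module S (M i)] [∀ i, IsPrecomplete I (M i)] :
    IsPrecomplete I (∀ i, M i) := by
  classical
  cases nonempty_fintype ι
  rw [← AdicCompletion.of_surjective_iff]
  intro y
  choose a ha using fun i ↦ AdicCompletion.of_surjective I (M i) (AdicCompletion.pi I M y i)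
  refine ⟨a, (AdicCompletion.piEquivOfFintype I M).injective ?_⟩
  rw [AdicCompletion.piEquivOfFintype_apply, AdicCompletion.piEquivOfFintype_apply]
  ext1 i
  rw [← ha]
  rfl

theorem le_of_le_sup_smul_of_isPrecomplete {E : Type*} [AddCommGroup E] [Module S E]
    [IsPrecomplete I S] {N M : Submodule S E} (hN : N.FG) (hNM : N ≤ M)
    (hM : ⨅ n : ℕ, I ^ n • M = ⊥) (hle : M ≤ N ⊔ I • M) : M ≤ N := by
  have : Module.Finite S N := Module.Finite.iff_fg.mpr hN
  obtain ⟨k, g, hg⟩ := Module.Finite.exists_fin' S N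
  have : IsPrecomplete I (Fin k → S) := isPrecomplete_pi
  have : IsHausdorff I M := ⟨fun z hz ↦ Subtype.ext <| by
    rw [ZeroMemClass.coe_zero, ← Submodule.mem_bot S, ← hM, Submodule.mem_iInf]
    exact fun n ↦ (Submodule.mem_smul_top_iff _ _ _).mp (SModEq.zero.mp (hz n))⟩
  have hsurj : Function.Surjective (Submodule.inclusion hNM ∘ₗ g) := by
    refine surjective_of_mkQ_comp_surjective (I := I) fun z ↦ ?_
    obtain ⟨z, rfl⟩ := Submodule.mkQ_surjective _ z
    obtain ⟨y, hy, w, hw, hyw⟩ := Submodule.mem_sup.mp (hle z.2)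
    obtain ⟨a, ha⟩ := hg ⟨y, hy⟩
    refine ⟨a, ?_⟩
    rw [LinearMap.comp_apply, LinearMap.comp_apply, ha, Submodule.mkQ_apply, Submodule.mkQ_apply,
      eq_comm, Submodule.Quotient.eq, Submodule.mem_smul_top_iff]
    simpa [← hyw] using hw
  intro z hz
  obtain ⟨a, ha⟩ := hsurj ⟨z, hz⟩
  have hgz : (g a : E) = z := congrArg Subtype.val ha
  exact hgz ▸ (g a).2

theorem le_sup_of_map_mk_le {N J : Ideal S}
    (h : N.map (Ideal.Quotient.mk I) ≤ J.map (Ideal.Quotient.mk I)) : N ≤ J ⊔ I := by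
  rwa [Ideal.map_le_iff_le_comap, Ideal.comap_map_of_surjective' _ Ideal.Quotient.mk_surjective,
    Ideal.mk_ker] at h

theorem exists_fg_le_sup [IsNoetherianRing (S ⧸ I)] (N : Ideal S) :
    ∃ N₀ : Ideal S, N₀.FG ∧ N₀ ≤ N ∧ N ≤ N₀ ⊔ I := by
  obtain ⟨s, hsN, hs⟩ := (Submodule.fg_span_iff_fg_span_finset_subset _).mp
    (IsNoetherian.noetherian (N.map (Ideal.Quotient.mk I)))
  classical
  obtain ⟨s₀, hs₀N, rfl⟩ := Finset.subset_set_image_iff.mp hsN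
  refine ⟨Ideal.span s₀, ⟨s₀, rfl⟩, Ideal.span_le.mpr hs₀N, ?_⟩
  refine le_sup_of_map_mk_le (Eq.le ?_)
  rw [Ideal.map_span, ← Finset.coe_image]
  exact hs

theorem exists_forall_le_sup_of_antitone [IsArtinianRing (S ⧸ I)] {J : ℕ → Ideal S}
    (hJ : Antitone J) : ∃ n, ∀ m ≥ n, J n ≤ J m ⊔ I := by
  obtain ⟨n, hn⟩ := IsArtinian.monotone_stabilizes (R := S ⧸ I) (M := S ⧸ I)
    ⟨fun n ↦ OrderDual.toDual ((J n).map (Ideal.Quotient.mk I)), fun _ _ h ↦ Ideal.map_mono (hJ h)⟩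
  exact ⟨n, fun m hm ↦ le_sup_of_map_mk_le (hn m hm).ge⟩

variable {x : S} [IsAdicComplete (Ideal.span {x}) S]

theorem le_of_le_sup_span_singleton [IsNoetherianRing (S ⧸ Ideal.span {x})] {N M : Ideal S}
    (hM : ∀ z, x * z ∈ M → z ∈ M) (hNM : N ≤ M) (hle : M ≤ N ⊔ Ideal.span {x}) : M ≤ N := by
  obtain ⟨N₀, hN₀, hN₀N, hNN₀⟩ := exists_fg_le_sup (I := Ideal.span {x}) N
  refine le_trans (le_of_le_sup_smul_of_isPrecomplete (I := Ideal.span {x}) hN₀ (hN₀N.trans hNM)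
    ?_ fun z hz ↦ ?_) hN₀N
  · rw [eq_bot_iff, ← IsHausdorff.iInf_pow_smul (I := Ideal.span {x}) (M := S) inferInstance]
    exact iInf_mono fun n ↦ smul_mono_right _ le_top
  · obtain ⟨y, hy, _, hw, rfl⟩ := Submodule.mem_sup.mp ((hle.trans (sup_le hNN₀ le_sup_right)) hz)
    obtain ⟨c, rfl⟩ := Ideal.mem_span_singleton.mp hw
    have hc : c ∈ M := hM c ((Ideal.add_mem_iff_right M (hNM (hN₀N hy))).mp hz)
    exact Submodule.add_mem_sup hy (Submodule.smul_mem_smul (Ideal.mem_span_singleton_self x) hc)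

end AdicallyComplete

section LocalizationAway

theorem exists_sq_mul_eq {L : Type*} [CommRing L] [IsArtinianRing L] [IsReduced L] (s : L) :
    ∃ b, s ^ 2 * b = s := by
  obtain ⟨n, b, hb⟩ := IsArtinian.exists_pow_succ_smul_dvd s (1 : L)
  rw [smul_eq_mul, smul_eq_mul, mul_one] at hb
  refine ⟨b, (sub_eq_zero.mp (IsReduced.eq_zero _ ⟨n + 1, ?_⟩)).symm⟩
  calc
    (s - s ^ 2 * b) ^ (n + 1) = s * (1 - s * b) ^ n * (s ^ n - s ^ (n + 1) * b) := by
      rw [show s - s ^ 2 * b = s * (1 - s * b) by ring, mul_pow]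
      ring
    _ = 0 := by rw [hb, sub_self, mul_zero]

theorem mem_span_singleton_pow_smul {S M : Type*} [CommRing S] [AddCommGroup M] [Module S M] {x : S}
    {T : Submodule S M} {n : ℕ} {z : M} : z ∈ Ideal.span {x} ^ n • T ↔ ∃ t ∈ T, x ^ n • t = z := by
  rw [Ideal.span_singleton_pow, Submodule.ideal_span_singleton_smul,
    Submodule.mem_smul_pointwise_iff_exists]

variable {S : Type*} [CommRing S] (x : S)

theorem isArtinianRing_away [IsAdicComplete (Ideal.span {x}) S]
    [IsArtinianRing (S ⧸ Ideal.span {x})] (L : Type*) [CommRing L] [Algebra S L]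
    [IsLocalization.Away x L] : IsArtinianRing L := by
  refine monotone_stabilizes_iff_artinian.mp fun f ↦ ?_
  let J (n : ℕ) : Ideal S := (OrderDual.ofDual (f n) : Ideal L).comap (algebraMap S L)
  have hJ : Antitone J := fun _ _ h ↦ Ideal.comap_mono (f.monotone h)
  obtain ⟨n, hn⟩ := exists_forall_le_sup_of_antitone (I := Ideal.span {x}) hJ
  refine ⟨n, fun m hm ↦ le_antisymm (f.monotone hm) ?_⟩
  have hsat (z : S) (hz : x * z ∈ J n) : z ∈ J n := by
    rw [Ideal.mem_comap, map_mul] at hz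
    exact (Ideal.unit_mul_mem_iff_mem (OrderDual.ofDual (f n)) (Away.algebraMap_isUnit x)).mp hz
  have hle : J n ≤ J m := le_of_le_sup_span_singleton hsat (hJ hm) (hn m hm)
  have hmap := Ideal.map_mono (f := algebraMap S L) hle
  rwa [IsLocalization.map_under (Submonoid.powers x),
    IsLocalization.map_under (Submonoid.powers x)] at hmap

variable {L : Type*} [CommRing L] [Algebra S L] [IsLocalization.Away x L]

theorem smul_eq_zero_of_isIdempotentElem [IsHausdorff (Ideal.span {x}) S] (hx : x ∈ S⁰) {y : L}
    (hy : IsIntegral S y) (he : IsIdempotentElem (x • y)) : x • y = 0 := by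
  have hinj : Function.Injective (algebraMap S L) :=
    IsLocalization.injective L (Submonoid.powers_le.mpr hx)
  obtain ⟨_, ⟨k, rfl⟩, hk⟩ :=
    FractionalIdeal.isFractional_of_fg (S := Submonoid.powers x) hy.fg_adjoin_singleton
  have hpow (n : ℕ) : ∃ c : S, algebraMap S L c = x ^ k • y ^ n :=
    hk _ (pow_mem (Algebra.self_mem_adjoin_singleton S y) n)
  obtain ⟨c, hc⟩ := hpow 1
  have hdvd (n : ℕ) : x ^ n ∣ x * c := by
    obtain ⟨c', hc'⟩ := hpow (n + 1)
    refine (pow_dvd_pow x n.le_succ).trans ⟨c', hinj ?_⟩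
    calc
      algebraMap S L (x * c) = x ^ k • (x • y) := by
        rw [map_mul, hc, pow_one, ← Algebra.smul_def, smul_comm]
      _ = x ^ k • (x • y) ^ (n + 1) := by rw [he.pow_succ_eq]
      _ = algebraMap S L (x ^ (n + 1) * c') := by
        rw [map_mul, hc', ← Algebra.smul_def, smul_pow, smul_comm]
  have hzero : x * c = 0 := IsHausdorff.haus (I := Ideal.span {x}) inferInstance _ fun n ↦ by
    rw [SModEq.zero, smul_eq_mul, Ideal.mul_top, Ideal.span_singleton_pow]
    exact Ideal.mem_span_singleton.mpr (hdvd n)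
  have hc0 : c = 0 := (mul_left_mem_nonZeroDivisors_eq_zero_iff hx).mp hzero
  rw [hc0, map_zero, pow_one, Algebra.smul_def, map_pow, eq_comm,
    (Away.algebraMap_pow_isUnit x k).mul_right_eq_zero] at hc
  rw [hc, smul_zero]

variable [IsArtinianRing (S ⧸ Ideal.span {x})]

theorem iInf_span_singleton_pow_smul_integralClosure [IsAdicComplete (Ideal.span {x}) S]
    [IsReduced S] (hx : x ∈ S⁰) :
    ⨅ n : ℕ, Ideal.span {x} ^ n • (integralClosure S L).toSubmodule = ⊥ := by
  have : IsArtinianRing L := isArtinianRing_away x L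
  have : IsReduced L := isReduced_of_injective
    (IsLocalization.algEquiv (Submonoid.powers x) L (Localization.Away x)) (AlgEquiv.injective _)
  refine (Submodule.eq_bot_iff _).mpr fun s hs ↦ ?_
  obtain ⟨b, hb⟩ := exists_sq_mul_eq s
  obtain ⟨m, b', hb'⟩ := Away.surj x b
  obtain ⟨t, ht, rfl⟩ := mem_span_singleton_pow_smul.mp (Submodule.mem_iInf _ |>.mp hs (m + 1))
  have hbt : x • (algebraMap S L b' * t) = x ^ (m + 1) • t * b := by
    simp only [Algebra.smul_def, map_pow, ← hb']
    ring
  have hidem : IsIdempotentElem (x ^ (m + 1) • t * b) := by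
    rw [IsIdempotentElem, mul_mul_mul_comm, ← sq, ← mul_assoc, hb]
  have hzero := smul_eq_zero_of_isIdempotentElem x hx (isIntegral_algebraMap.mul ht) (hbt ▸ hidem)
  rw [← hb, sq, mul_assoc, ← hbt, hzero, mul_zero]

theorem exists_span_singleton_pow_smul_le_sup (T : Submodule S L) :
    ∃ N : ℕ, Ideal.span {x} ^ N • T ≤ 1 ⊔ Ideal.span {x} ^ (N + 1) • T := by
  let J (n : ℕ) : Ideal S := (Ideal.span {x} ^ n • T).comap (Algebra.linearMap S L)
  have hJ : Antitone J := fun _ _ h ↦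
    Submodule.comap_mono (Submodule.smul_mono_left (Ideal.pow_le_pow_right h))
  obtain ⟨N, hN⟩ := exists_forall_le_sup_of_antitone (I := Ideal.span {x}) hJ
  have hdescent (k : ℕ) : ∀ t ∈ T, x ^ (N + k) • t ∈ (1 : Submodule S L) →
      x ^ N • t ∈ 1 ⊔ Ideal.span {x} ^ (N + 1) • T := by
    induction k with
    | zero => exact fun t _ ht ↦ Submodule.mem_sup_left ht
    | succ k ih =>
      intro t htT ht
      obtain ⟨s, hs⟩ := Submodule.mem_one.mp ht
      have hsJ : s ∈ J N := mem_span_singleton_pow_smul.mpr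
        ⟨x ^ (k + 1) • t, T.smul_mem _ htT, by rw [smul_smul, ← pow_add]; exact hs.symm⟩
      obtain ⟨j, hj, w, hw, rfl⟩ := Submodule.mem_sup.mp (hN (N + k + 2) (by lia) hsJ)
      obtain ⟨t', ht'T, ht'⟩ := mem_span_singleton_pow_smul.mp hj
      obtain ⟨c, rfl⟩ := Ideal.mem_span_singleton.mp hw
      have hc : x ^ (N + k) • (t - x • t') = algebraMap S L c := by
        apply (Away.algebraMap_isUnit (S := L) x).mul_left_cancel
        rw [map_add, map_mul, ← Algebra.linearMap_apply S L j, ← ht'] at hs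
        simp only [Algebra.smul_def, map_pow] at hs ⊢
        linear_combination -hs
      have hmem := ih _ (T.sub_mem htT (T.smul_mem x ht'T)) (Submodule.mem_one.mpr ⟨c, hc.symm⟩)
      rw [smul_sub, smul_smul, ← pow_succ] at hmem
      exact (Submodule.sub_mem_iff_left _ (Submodule.mem_sup_right
        (mem_span_singleton_pow_smul.mpr ⟨t', ht'T, rfl⟩))).mp hmem
  refine ⟨N, fun z hz ↦ ?_⟩
  obtain ⟨t, htT, rfl⟩ := mem_span_singleton_pow_smul.mp hz
  obtain ⟨k, a, ha⟩ := Away.surj x t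
  refine hdescent k t htT (Submodule.mem_one.mpr ⟨x ^ N * a, ?_⟩)
  rw [map_mul, ← ha, Algebra.smul_def, map_pow, map_pow]
  ring

theorem exists_forall_isIntegral_pow_smul_mem_one [IsAdicComplete (Ideal.span {x}) S]
    [IsReduced S] (hx : x ∈ S⁰) :
    ∃ N : ℕ, ∀ t : L, IsIntegral S t → x ^ N • t ∈ (1 : Submodule S L) := by
  let T : Submodule S L := (integralClosure S L).toSubmodule
  obtain ⟨N, hN⟩ := exists_span_singleton_pow_smul_le_sup x T
  have hle : 1 ⊔ Ideal.span {x} ^ N • T ≤ T :=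
    sup_le (Submodule.one_le.mpr (Subalgebra.one_mem _)) Submodule.smul_le_right
  refine ⟨N, fun t ht ↦ ?_⟩
  have hmem : x ^ N • t ∈ 1 ⊔ Ideal.span {x} ^ N • T :=
    Submodule.mem_sup_right (mem_span_singleton_pow_smul.mpr ⟨t, ht, rfl⟩)
  refine le_of_le_sup_smul_of_isPrecomplete (I := Ideal.span {x}) (fg_one S L) le_sup_left ?_ ?_
    hmem
  · rw [eq_bot_iff, ← iInf_span_singleton_pow_smul_integralClosure x hx]
    exact iInf_mono fun n ↦ smul_mono_right _ hle
  · refine sup_le le_sup_left (hN.trans (sup_le_sup_left ?_ 1))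
    rw [pow_succ', Submodule.mul_smul]
    exact smul_mono_right _ le_sup_right

end LocalizationAway

section LocalRingsOfDimensionOne

theorem pow_smul_mem_one_of_map {R S K L : Type*} [CommRing R] [CommRing S] [Algebra R S]
    [CommRing K] [CommRing L] [Algebra R K] [Algebra S L] {x : R} [IsLocalization.Away x K]
    [IsLocalization.Away (algebraMap R S x) L] (hx : algebraMap R S x ∈ S⁰)
    (hdvd : ∀ a b : R, algebraMap R S a ∣ algebraMap R S b → a ∣ b) {N : ℕ} {t : K}
    (ht : algebraMap R S x ^ N • Away.map K L (algebraMap R S) x t ∈ (1 : Submodule S L)) :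
    x ^ N • t ∈ (1 : Submodule R K) := by
  have hinj : Function.Injective (algebraMap S L) :=
    IsLocalization.injective L (Submonoid.powers_le.mpr hx)
  obtain ⟨s, hs⟩ := Submodule.mem_one.mp ht
  obtain ⟨n, a, ha⟩ := Away.surj x t
  obtain ⟨b, hb⟩ : x ^ n ∣ x ^ N * a := by
    refine hdvd _ _ ⟨s, hinj ?_⟩
    have hmap := congrArg (Away.map K L (algebraMap R S) x) ha
    rw [map_mul, map_pow, Away.map, IsLocalization.map_eq, IsLocalization.map_eq] at hmap
    simp only [map_mul, map_pow, hs, Algebra.smul_def, ← hmap, Away.map]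
    ring
  refine Submodule.mem_one.mpr ⟨b, (Away.algebraMap_pow_isUnit x n).mul_left_cancel ?_⟩
  rw [← map_pow, ← map_mul, ← hb, map_mul, ← ha, Algebra.smul_def, map_pow, map_pow]
  ring

theorem isArtinianRing_quotient_span_singleton {R : Type*} [CommRing R] [IsNoetherianRing R]
    [Ring.KrullDimLE 1 R] {d : R} (hd : d ∈ R⁰) : IsArtinianRing (R ⧸ Ideal.span {d}) := by
  have hdim : ringKrullDim (R ⧸ Ideal.span {d}) + 1 ≤ 0 + 1 := by
    simpa using (ringKrullDim_quotient_succ_le_of_nonZeroDivisor hd).trans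
      (Ring.krullDimLE_iff.mp ‹Ring.KrullDimLE 1 R›)
  rw [isArtinianRing_iff_isNoetherianRing_krullDimLE_zero, Ring.krullDimLE_iff]
  exact ⟨inferInstance, ENat.WithBot.add_le_add_one_right_iff.mp hdim⟩

variable {R : Type*} [CommRing R] [IsLocalRing R]

local notation "R̂" => AdicCompletion (maximalIdeal R) R

theorem exists_mem_maximalIdeal_mem_nonZeroDivisors (hdim : 0 < ringKrullDim R)
    (hCM : IsCohenMacaulayLocalRing R) : ∃ x ∈ maximalIdeal R, x ∈ R⁰ := by
  obtain ⟨rs, hrs, hreg, hlen⟩ := hCM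
  cases rs with
  | nil => exact absurd (hlen.symm ▸ hdim) (by simp)
  | cons x rs =>
    refine ⟨x, hrs x List.mem_cons_self, mem_nonZeroDivisors_iff_left.mpr ?_⟩
    exact isSMulRegular_iff_right_eq_zero_of_smul.mp
      ((RingTheory.Sequence.isWeaklyRegular_cons_iff _ _ _).mp hreg.toIsWeaklyRegular).1

theorem exists_map_maximalIdeal_pow_le_span_singleton (x : R)
    [IsArtinianRing (R ⧸ Ideal.span {x})] : ∃ N : ℕ,
    (maximalIdeal R ^ N).map (algebraMap R R̂) ≤ Ideal.span {algebraMap R R̂ x} := by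
  obtain ⟨N, hN⟩ := exists_maximalIdeal_pow_le_of_isArtinianRing_quotient (Ideal.span {x})
  refine ⟨N, (Ideal.map_mono hN).trans_eq ?_⟩
  rw [Ideal.map_span, Set.image_singleton]

variable [IsNoetherianRing R]

theorem isLocalization_away_fractionRing [Ring.KrullDimLE 1 R] {x : R} (hxm : x ∈ maximalIdeal R)
    (hx : x ∈ R⁰) : IsLocalization.Away x (FractionRing R) := by
  refine .mk x (map_units _ ⟨x, hx⟩) (fun t ↦ ?_) fun a b hab ↦
    ⟨0, congrArg _ (IsFractionRing.injective R _ hab)⟩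
  obtain ⟨⟨a, d⟩, hd⟩ := IsLocalization.surj R⁰ t
  have : IsArtinianRing (R ⧸ Ideal.span {(d : R)}) := isArtinianRing_quotient_span_singleton d.2
  obtain ⟨n, hn⟩ := exists_maximalIdeal_pow_le_of_isArtinianRing_quotient (Ideal.span {(d : R)})
  obtain ⟨e, he⟩ := Ideal.mem_span_singleton.mp (hn (Ideal.pow_mem_pow hxm n))
  refine ⟨n, a * e, ?_⟩
  rw [← map_pow, he, map_mul, map_mul, ← hd, mul_assoc]

theorem dvd_of_algebraMap_adicCompletion_dvd {a b : R} (h : algebraMap R R̂ a ∣ algebraMap R R̂ b) :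
    a ∣ b := by
  have : Module.FaithfullyFlat R R̂ := Module.FaithfullyFlat.of_flat_of_isLocalHom
  rw [← Ideal.mem_span_singleton,
    ← Ideal.comap_map_eq_self_of_faithfullyFlat (B := R̂) (Ideal.span {a}), Ideal.mem_comap,
    Ideal.map_span, Set.image_singleton]
  exact Ideal.mem_span_singleton.mpr h

theorem algebraMap_adicCompletion_mem_nonZeroDivisors {x : R} (hx : x ∈ R⁰) :
    algebraMap R R̂ x ∈ R̂⁰ := by
  have hreg : IsSMulRegular R x := isSMulRegular_iff_right_eq_zero_of_smul.mpr
    (mem_nonZeroDivisors_iff.mp hx).1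
  exact mem_nonZeroDivisors_iff_left.mpr
    (isSMulRegular_iff_right_eq_zero_of_smul.mp (hreg.of_flat (S := R̂)))

section

variable {x : R} [IsArtinianRing (R ⧸ Ideal.span {x})]

theorem isAdicComplete_span_singleton_adicCompletion (hxm : x ∈ maximalIdeal R) :
    IsAdicComplete (Ideal.span {algebraMap R R̂ x}) R̂ := by
  obtain ⟨N, hN⟩ := exists_map_maximalIdeal_pow_le_span_singleton x
  refine isAdicComplete_of_pow_le (I := maximalIdeal R̂) (N := N) ?_ ?_
  · rw [Ideal.span_singleton_le_iff_mem, AdicCompletion.maximalIdeal_eq_map]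
    exact Ideal.mem_map_of_mem _ hxm
  · rwa [AdicCompletion.maximalIdeal_eq_map, ← Ideal.map_pow]

theorem isArtinianRing_adicCompletion_quotient_span_singleton :
    IsArtinianRing (R̂ ⧸ Ideal.span {algebraMap R R̂ x}) := by
  obtain ⟨N, hN⟩ := exists_map_maximalIdeal_pow_le_span_singleton x
  let φ : R ⧸ Ideal.span {x} →+* R̂ ⧸ Ideal.span {algebraMap R R̂ x} :=
    Ideal.quotientMap _ (algebraMap R R̂) <|
      (Ideal.span_singleton_le_iff_mem _).mpr (Ideal.mem_span_singleton_self (algebraMap R R̂ x))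
  suffices hφ : Function.Surjective φ from hφ.isArtinianRing
  intro z
  obtain ⟨z, rfl⟩ := Ideal.Quotient.mk_surjective z
  obtain ⟨r, hr⟩ := Submodule.mkQ_surjective _ (AdicCompletion.eval (maximalIdeal R) R N z)
  refine ⟨Ideal.Quotient.mk _ r, Ideal.Quotient.eq.mpr (hN ?_)⟩
  have hker : algebraMap R R̂ r - z ∈ (AdicCompletion.eval (maximalIdeal R) R N).ker := by
    rw [LinearMap.mem_ker, map_sub, sub_eq_zero, ← hr]
    rfl
  rwa [← AdicCompletion.pow_smul_top_eq_ker_eval (maximalIdeal R).fg_of_isNoetherianRing,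
    Ideal.smul_top_eq_map] at hker

end

theorem exists_forall_isIntegral_pow_smul_mem_one_of_isReduced_adicCompletion [IsReduced R̂]
    [Ring.KrullDimLE 1 R] {x : R} (hxm : x ∈ maximalIdeal R) (hx : x ∈ R⁰) :
    ∃ N : ℕ, ∀ t : FractionRing R, IsIntegral R t →
      x ^ N • t ∈ (1 : Submodule R (FractionRing R)) := by
  let y : R̂ := algebraMap R R̂ x
  let L := Localization.Away y
  have hy : y ∈ R̂⁰ := algebraMap_adicCompletion_mem_nonZeroDivisors hx
  have : IsArtinianRing (R ⧸ Ideal.span {x}) := isArtinianRing_quotient_span_singleton hx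
  have : IsAdicComplete (Ideal.span {y}) R̂ := isAdicComplete_span_singleton_adicCompletion hxm
  have : IsArtinianRing (R̂ ⧸ Ideal.span {y}) :=
    isArtinianRing_adicCompletion_quotient_span_singleton
  have : IsLocalization.Away x (FractionRing R) := isLocalization_away_fractionRing hxm hx
  obtain ⟨N, hN⟩ := exists_forall_isIntegral_pow_smul_mem_one y (L := L) hy
  refine ⟨N, fun t ht ↦ pow_smul_mem_one_of_map hy
    (fun _ _ ↦ dvd_of_algebraMap_adicCompletion_dvd) (hN _ ?_)⟩
  exact ht.map_of_comp_eq (algebraMap R R̂) _ (IsLocalization.map_comp _).symm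

theorem finite_integralClosure_fractionRing_of_isReduced_adicCompletion [IsReduced R̂]
    [Ring.KrullDimLE 1 R] {x : R} (hxm : x ∈ maximalIdeal R) (hx : x ∈ R⁰) :
    Module.Finite R (integralClosure R (FractionRing R)) := by
  obtain ⟨N, hN⟩ :=
    exists_forall_isIntegral_pow_smul_mem_one_of_isReduced_adicCompletion hxm hx
  have hxN : algebraMap R (FractionRing R) (x ^ N) ∈ (FractionRing R)⁰ :=
    (map_units (FractionRing R) ⟨x ^ N, pow_mem hx N⟩).mem_nonZeroDivisors
  have hfg : (1 / Submodule.span R {algebraMap R (FractionRing R) (x ^ N)}).FG :=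
    fg_one_div (Submodule.mem_span_singleton_self _) hxN
  refine Module.Finite.iff_fg (N := (integralClosure R _).toSubmodule).mpr
    (hfg.of_le fun t ht ↦ ?_)
  rw [Submodule.mem_div_iff_forall_mul_mem]
  intro y hy
  obtain ⟨c, rfl⟩ := Submodule.mem_span_singleton.mp hy
  rw [mul_smul_comm, mul_comm, ← Algebra.smul_def]
  exact Submodule.smul_mem _ c (hN t ht)

end LocalRingsOfDimensionOne

theorem integrallyClosed_containing_conductor_reflexive_trace_general
    (R : Type*) [CommRing R] [IsNoetherianRing R] [Ring.KrullDimLE 1 R]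
    [Module.Finite R (integralClosure R (FractionRing R))]
    (I : Ideal R) (hic : idealIntegralClosure I = (I : Set R)) (hC : conductorIdeal R ≤ I) :
    Module.IsReflexive R I ∧ traceIdeal R I = I := by
  obtain ⟨d, hdC, hd⟩ := exists_mem_conductorIdeal_mem_nonZeroDivisors (R := R)
  exact ⟨isReflexive_of_one_div_one_div_le (hC hdC) hd
      (one_div_one_div_le_self_of_idealIntegralClosure_eq hic (hC hdC) hd),
    traceIdeal_eq_self_of_one_div_le (hC hdC) hd (one_div_le_div_self_of_conductorIdeal_le hic hC)⟩

/-- Let `R` be an analytically unramified one-dimensional Cohen–Macaulay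
local ring with conductor ideal `C = R : R̄` and infinite residue field. Then every integrally
closed ideal of `R` containing `C` is a reflexive trace ideal. -/
theorem integrallyClosed_containing_conductor_reflexive_trace
    (R : Type*) [CommRing R] [IsNoetherianRing R] [IsLocalRing R]
    (hur : IsReduced (AdicCompletion (maximalIdeal R) R))
    (hdim : ringKrullDim R = 1) (hCM : IsCohenMacaulayLocalRing R)
    (hk : Infinite (ResidueField R))
    (I : Ideal R) (hic : idealIntegralClosure I = (I : Set R))
    (hC : conductorIdeal R ≤ I) :
    Module.IsReflexive R ↥I ∧ traceIdeal R ↥I = I := by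
  have : Ring.KrullDimLE 1 R := Ring.krullDimLE_iff.mpr hdim.le
  obtain ⟨x, hxm, hx⟩ := exists_mem_maximalIdeal_mem_nonZeroDivisors (hdim ▸ one_pos) hCM
  have := finite_integralClosure_fractionRing_of_isReduced_adicCompletion hxm hx
  exact integrallyClosed_containing_conductor_reflexive_trace_general R I hic hC
end

section
/- Let R be an analytically unramified one-dimensional non-regular Cohen–Macaulay local ring with infinite residue field, conductor C, length(R/C) = 4, and minimal multiplicity. Then every proper regular trace ideal of R is reflexive. -/
open IsLocalRing

/-!
Write `m` for the maximal ideal, `C` for the conductor and `S` for the normalization. Let `J` be a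
proper regular trace ideal. Since `S` is semilocal, its regular ideals are invertible and the
residue field is infinite, `J S = j S` for some `j ∈ J`; hence `C J ⊆ j R`, and `C ⊆ J` because `J`
is a trace ideal. As `C ⊆ J ⊆ m` and `length (R / C) ≤ 4`, either `J` has length at most one over
`C` or `m` has length at most one over `J`.

If `J = C`, if `J / C` is simple, or if `J = m`, then `J * J` lies in the principal ideal generated
by some regular element of `J`, which makes `J` reflexive.

If `m / J` is simple, let `m ^ 2 = x m` and let `B = m : m`, so that `m = x B`. The trace property
makes `J` an ideal of `B`, and a socle element of `B / x B` annihilated by `x⁻¹ J` yields an element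
of `R : J` that is not in `R : m`. Hence `R : (R : J)` does not contain `m`, and it equals `J`.
-/

section TraceIdeals

variable {R : Type*} [CommRing R] {J : Ideal R}

lemma colon_mul_le (I I' : Ideal R) : I.colon (I' : Set R) * I' ≤ I :=
  Ideal.mul_le.mpr fun _ hc y hy => Submodule.mem_colon.mp hc y hy

lemma le_colon_colon (I I' : Ideal R) : I' ≤ I.colon (I.colon (I' : Set R) : Set R) :=
  fun y hy => Submodule.mem_colon.mpr fun c hc => by
    rw [smul_eq_mul, mul_comm]
    exact Submodule.mem_colon.mp hc y hy

lemma exists_linearMap_of_forall_dvd_mul {c d : R} (hd : d ∈ nonZeroDivisors R)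
    (hc : ∀ y ∈ J, d ∣ c * y) : ∃ f : J →ₗ[R] R, ∀ y : J, d * f y = c * y := by
  choose f hf using fun y : J => hc y y.2
  refine ⟨⟨⟨f, fun y z => ?_⟩, fun r y => ?_⟩, fun y => (hf y).symm⟩ <;>
    refine (mul_cancel_left_mem_nonZeroDivisors hd).mp ?_
  · rw [mul_add, ← hf, ← hf, ← hf, Submodule.coe_add, mul_add]
  · rw [RingHom.id_apply, smul_eq_mul, mul_left_comm, ← hf, ← hf, Submodule.coe_smul, smul_eq_mul,
      mul_left_comm]

lemma mul_le_span_singleton_mul_of_traceIdeal_eq (htr : traceIdeal R J = J) {I : Ideal R} {d : R}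
    (hd : d ∈ nonZeroDivisors R) (hIJ : I * J ≤ Ideal.span {d}) :
    I * J ≤ Ideal.span {d} * J := by
  refine Ideal.mul_le.mpr fun c hc y hy => ?_
  obtain ⟨f, hf⟩ := exists_linearMap_of_forall_dvd_mul hd fun y' hy' =>
    Ideal.mem_span_singleton.mp (hIJ (Ideal.mul_mem_mul hc hy'))
  have hfJ : f ⟨y, hy⟩ ∈ J :=
    htr.le (le_iSup (fun g : J →ₗ[R] R => LinearMap.range g) f ⟨⟨y, hy⟩, rfl⟩)
  exact Ideal.mem_span_singleton_mul.mpr ⟨_, hfJ, hf _⟩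

lemma le_of_mul_le_span_singleton_of_traceIdeal_eq (htr : traceIdeal R J = J) {I : Ideal R} {j : R}
    (hjJ : j ∈ J) (hj : j ∈ nonZeroDivisors R) (hIJ : I * J ≤ Ideal.span {j}) : I ≤ J := by
  intro c hc
  obtain ⟨y, hy, hyc⟩ := Ideal.mem_span_singleton_mul.mp
    (mul_le_span_singleton_mul_of_traceIdeal_eq htr hj hIJ (Ideal.mul_mem_mul hc hjJ))
  rw [mul_comm c] at hyc
  exact (mul_cancel_left_mem_nonZeroDivisors hj).mp hyc ▸ hy

-- Multiplication by `a` identifies `(R : J)` with `(aR : J)`, hence `R : (R : J)` with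
-- `aR : (aR : J)`.
lemma isReflexive_of_colon_colon_le {a : R} (haJ : a ∈ J) (ha : a ∈ nonZeroDivisors R)
    (h : (Ideal.span {a}).colon ((Ideal.span {a}).colon (J : Set R) : Set R) ≤ J) :
    Module.IsReflexive R J := by
  have dual_apply (f : Module.Dual R J) (y : J) : a * f y = f ⟨a, haJ⟩ * y := by
    rw [mul_comm _ (y : R), ← smul_eq_mul, ← smul_eq_mul, ← map_smul, ← map_smul]
    congr 1
    exact Subtype.ext (mul_comm _ _)
  have bidual_apply (φ : Module.Dual R (Module.Dual R J)) (f : Module.Dual R J) :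
      a * φ f = f ⟨a, haJ⟩ * φ J.subtype := by
    rw [← smul_eq_mul, ← smul_eq_mul, ← map_smul, ← map_smul]
    congr 1
    exact LinearMap.ext (dual_apply f)
  have bidual_mem (φ : Module.Dual R (Module.Dual R J)) : φ J.subtype ∈ J := by
    refine h (Submodule.mem_colon.mpr fun c hc => ?_)
    obtain ⟨f, hf⟩ := exists_linearMap_of_forall_dvd_mul ha fun y hy =>
      Ideal.mem_span_singleton.mp (Submodule.mem_colon.mp hc y hy)
    have hfa : f ⟨a, haJ⟩ = c :=
      (mul_cancel_left_mem_nonZeroDivisors ha).mp ((hf _).trans (mul_comm c a))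
    exact Ideal.mem_span_singleton.mpr ⟨φ f, by rw [bidual_apply, hfa, smul_eq_mul, mul_comm]⟩
  refine ⟨⟨(injective_iff_map_eq_zero _).mpr fun y hy => ?_, fun φ => ⟨⟨_, bidual_mem φ⟩, ?_⟩⟩⟩
  · exact Subtype.ext (DFunLike.congr_fun hy J.subtype)
  · ext f
    refine (mul_cancel_left_mem_nonZeroDivisors ha).mp ?_
    rw [Module.Dual.eval_apply, dual_apply, bidual_apply]

lemma isReflexive_of_mul_self_le_span_singleton (htr : traceIdeal R J = J) {j : R} (hjJ : j ∈ J)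
    (hj : j ∈ nonZeroDivisors R) (hJ : J * J ≤ Ideal.span {j}) : Module.IsReflexive R J := by
  refine isReflexive_of_colon_colon_le hjJ hj ?_
  have hJcolon : J ≤ (Ideal.span {j}).colon (J : Set R) := fun y hy =>
    Submodule.mem_colon.mpr fun y' hy' => hJ (Ideal.mul_mem_mul hy hy')
  refine (Submodule.colon_mono le_rfl hJcolon).trans
    (le_of_mul_le_span_singleton_of_traceIdeal_eq htr hjJ hj (colon_mul_le _ _))

lemma not_isPrincipal_maximalIdeal_of_traceIdeal_eq [IsNoetherianRing R] [IsLocalRing R]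
    (htr : traceIdeal R J = J) (hJ : J ≠ ⊤) {a : R} (haJ : a ∈ J) (ha : a ∈ nonZeroDivisors R) :
    ¬ (maximalIdeal R).IsPrincipal := by
  rintro ⟨x, hx : maximalIdeal R = Ideal.span {x}⟩
  have hJx : J ≤ Ideal.span {x} := hx ▸ le_maximalIdeal hJ
  obtain ⟨y, rfl⟩ := Ideal.mem_span_singleton.mp (hJx haJ)
  have hJmul : J ≤ maximalIdeal R • J := by
    simpa [hx] using mul_le_span_singleton_mul_of_traceIdeal_eq (I := ⊤) htr
      (mul_mem_nonZeroDivisors.mp ha).1 (by simpa using hJx)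
  have hbot : J = ⊥ := Submodule.eq_bot_of_le_smul_of_le_jacobson_bot _ _
    (IsNoetherian.noetherian J) hJmul (maximalIdeal_le_jacobson ⊥)
  exact nonZeroDivisors.ne_zero ha (by simpa [hbot] using haJ)

end TraceIdeals

section ArtinianQuotients

lemma exists_ne_zero_forall_mul_eq_zero {A : Type*} [CommRing A] [IsArtinianRing A] {I : Ideal A}
    (hI : I ≠ ⊤) : ∃ z ≠ 0, ∀ p ∈ I, z * p = 0 := by
  have : IsFractionRing A A := IsFractionRing.self_iff_nonZeroDivisors_le_isUnit.mpr fun _ =>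
    IsArtinianRing.isUnit_of_mem_nonZeroDivisors
  obtain ⟨P, hP, hIP⟩ := Ideal.exists_le_maximal I hI
  obtain ⟨-, z, hz⟩ := isAssociatedPrime_iff.mp
    (AssociatedPrimes.mem_iff.mp (hP.mem_associatedPrimes_of_isFractionRing A P))
  refine ⟨z, ?_, fun p hp => ?_⟩
  · rintro rfl
    exact hP.ne_top (hz.trans Submodule.colon_singleton_zero)
  · have hpz : p ∈ (⊥ : Ideal A).colon {z} := hz ▸ hIP hp
    rwa [Submodule.mem_colon_singleton, smul_eq_mul, Submodule.mem_bot, mul_comm] at hpz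

lemma exists_notMem_span_singleton_forall_mul_mem {A : Type*} [CommRing A] {t : A}
    [IsArtinianRing (A ⧸ Ideal.span {t})] {I : Ideal A} (hI : I ≠ ⊤) (htI : t ∈ I) :
    ∃ z ∉ Ideal.span {t}, ∀ p ∈ I, z * p ∈ Ideal.span {t} := by
  have hmap : I.map (Ideal.Quotient.mk (Ideal.span {t})) ≠ ⊤ := fun h => hI <| by
    rw [← Ideal.comap_top (f := Ideal.Quotient.mk (Ideal.span {t})), ← h,
      Ideal.comap_map_mk ((Ideal.span_singleton_le_iff_mem I).mpr htI)]
  obtain ⟨z, hz, hzI⟩ := exists_ne_zero_forall_mul_eq_zero hmap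
  obtain ⟨z, rfl⟩ := Ideal.Quotient.mk_surjective z
  refine ⟨z, fun h => hz (Ideal.Quotient.eq_zero_iff_mem.mpr h), fun p hp => ?_⟩
  rw [← Ideal.Quotient.eq_zero_iff_mem, map_mul]
  exact hzI _ (Ideal.mem_map_of_mem _ hp)

lemma isArtinianRing_quotient_span_algebraMap {R : Type*} (A : Type*) [CommRing R] [CommRing A]
    [Algebra R A] [Module.Finite R A] (t : R) [IsArtinianRing (R ⧸ Ideal.span {t})] :
    IsArtinianRing (A ⧸ Ideal.span {algebraMap R A t}) := by
  rw [← Set.image_singleton, ← Ideal.map_span]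
  have : Module.Finite (R ⧸ Ideal.span {t}) (A ⧸ (Ideal.span {t}).map (algebraMap R A)) :=
    Module.Finite.of_restrictScalars_finite R _ _
  exact IsArtinianRing.of_finite (R ⧸ Ideal.span {t}) _

lemma isArtinianRing_quotient_of_isFiniteLength {R : Type*} [CommRing R] {I : Ideal R}
    (h : IsFiniteLength R (R ⧸ I)) : IsArtinianRing (R ⧸ I) :=
  have := (isFiniteLength_iff_isNoetherian_isArtinian.mp h).2
  isArtinian_of_tower R this

lemma krullDimLE_one_of_maximalIdeal_sq_le_span_singleton {R : Type*} [CommRing R]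
    [IsNoetherianRing R] [IsLocalRing R] {x : R} (hx : x ∈ maximalIdeal R)
    (h : maximalIdeal R ^ 2 ≤ Ideal.span {x}) : Ring.KrullDimLE 1 R := by
  have hmin : maximalIdeal R ∈ (Ideal.span {x}).minimalPrimes :=
    ⟨⟨inferInstance, (Ideal.span_singleton_le_iff_mem _).mpr hx⟩,
      fun p ⟨hp, hxp⟩ _ => hp.le_of_pow_le (h.trans hxp)⟩
  rw [Ring.krullDimLE_iff, ← maximalIdeal_height_eq_ringKrullDim]
  exact_mod_cast Ideal.height_le_one_of_isPrincipal_of_mem_minimalPrimes _ _ hmin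

end ArtinianQuotients

section MultiplierRing

variable {R K : Type*} [CommRing R] [CommRing K] [Algebra R K]

variable (K) in
/-- The ring `I : I` of those `b : K` with `b * I ⊆ I`; for a regular ideal `I` and `K` the total
ring of fractions of `R` it is the endomorphism ring of `I`. -/
def multiplierRing (I : Ideal R) : Subalgebra R K where
  carrier := {b | ∀ y ∈ I, ∃ y' ∈ I, b * algebraMap R K y = algebraMap R K y'}
  mul_mem' {a b} ha hb y hy := by
    obtain ⟨y₁, hy₁, hb⟩ := hb y hy
    obtain ⟨y₂, hy₂, ha⟩ := ha y₁ hy₁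
    exact ⟨y₂, hy₂, by rw [mul_assoc, hb, ha]⟩
  add_mem' {a b} ha hb y hy := by
    obtain ⟨y₁, hy₁, ha⟩ := ha y hy
    obtain ⟨y₂, hy₂, hb⟩ := hb y hy
    exact ⟨y₁ + y₂, I.add_mem hy₁ hy₂, by rw [add_mul, ha, hb, map_add]⟩
  algebraMap_mem' r y hy := ⟨r * y, I.mul_mem_left r hy, (map_mul _ _ _).symm⟩

lemma finite_subalgebra_of_forall_mul_mem_range [IsNoetherianRing R] (T : Subalgebra R K) {c : R}
    (hc : IsUnit (algebraMap R K c))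
    (h : ∀ s ∈ T, algebraMap R K c * s ∈ LinearMap.range (Algebra.linearMap R K)) :
    Module.Finite R T :=
  Module.Finite.of_injective
    (((LinearMap.mulLeft R (algebraMap R K c)).comp T.toSubmodule.subtype).codRestrict _
      fun s => h s s.2)
    fun _ _ hs => Subtype.ext (hc.mul_left_cancel (congrArg Subtype.val hs))

lemma finite_multiplierRing [IsNoetherianRing R] {I : Ideal R} {t : R} (htI : t ∈ I)
    (ht : IsUnit (algebraMap R K t)) : Module.Finite R (multiplierRing K I) := by
  refine finite_subalgebra_of_forall_mul_mem_range _ ht fun b hb => ?_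
  obtain ⟨y, -, hy⟩ := hb t htI
  exact ⟨y, by rw [mul_comm, hy, Algebra.linearMap_apply]⟩

lemma dvd_of_span_singleton_mul_le [IsNoetherianRing R] [IsIntegrallyClosedIn R K] {I : Ideal R}
    {t z : R} (htI : t ∈ I) (ht : IsUnit (algebraMap R K t))
    (h : Ideal.span {z} * I ≤ Ideal.span {t} * I) : t ∣ z := by
  obtain ⟨b, hb⟩ := ht.dvd (a := algebraMap R K z)
  have hbI : b ∈ multiplierRing K I := fun y hy => by
    obtain ⟨y', hy', hty'⟩ := Ideal.mem_span_singleton_mul.mp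
      (h (Ideal.mul_mem_mul (Ideal.mem_span_singleton_self z) hy))
    refine ⟨y', hy', ht.mul_left_cancel ?_⟩
    rw [← mul_assoc, ← hb, ← map_mul, ← map_mul, hty']
  have := finite_multiplierRing htI ht
  obtain ⟨b', rfl⟩ := IsIntegrallyClosedIn.isIntegral_iff.mp
    (IsIntegral.of_mem_of_fg _ (Module.Finite.iff_fg.mp this) b hbI)
  refine ⟨b', IsIntegralClosure.algebraMap_injective R R K ?_⟩
  rw [hb, map_mul]

lemma span_singleton_mul_colon_le {t z : R} (ht : t ∈ nonZeroDivisors R) {I : Ideal R} (htI : t ∈ I)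
    (hz : ∀ q ∈ ((Ideal.span {t}).colon (I : Set R) * I).colon {t}, z * q ∈ Ideal.span {t}) :
    Ideal.span {z} * (Ideal.span {t}).colon (I : Set R) ≤
      Ideal.span {t} * (Ideal.span {t}).colon (I : Set R) := by
  have mul_self_dvd {c y : R} (hc : c ∈ (Ideal.span {t}).colon (I : Set R)) (hy : y ∈ I) :
      t * t ∣ z * c * y := by
    have hcy := Ideal.mul_mem_mul hc hy
    obtain ⟨q, hq⟩ := Ideal.mem_span_singleton.mp (colon_mul_le _ _ hcy)
    have hzq : z * q ∈ Ideal.span {t} := hz q <| Submodule.mem_colon_singleton.mpr <| by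
      rwa [smul_eq_mul, mul_comm q, ← hq]
    rw [mul_assoc, hq, mul_left_comm]
    exact mul_dvd_mul_left t (Ideal.mem_span_singleton.mp hzq)
  refine Ideal.span_singleton_mul_le_iff.mpr fun c hc => ?_
  obtain ⟨q, hq⟩ := mul_self_dvd hc htI
  have hzc : t * q = z * c := (mul_cancel_left_mem_nonZeroDivisors ht).mp <| by
    rw [← mul_assoc, ← hq, mul_comm]
  refine Ideal.mem_span_singleton_mul.mpr ⟨q, Submodule.mem_colon.mpr fun y hy => ?_, hzc⟩
  obtain ⟨r, hr⟩ := mul_self_dvd hc hy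
  refine Ideal.mem_span_singleton.mpr ⟨r, (mul_cancel_left_mem_nonZeroDivisors ht).mp ?_⟩
  rw [smul_eq_mul, ← mul_assoc, hzc, hr, mul_assoc]

variable (K) in
lemma colon_mul_eq_span_singleton [IsNoetherianRing R] [IsIntegrallyClosedIn R K] {t : R}
    [IsArtinianRing (R ⧸ Ideal.span {t})] (ht : IsUnit (algebraMap R K t)) {I : Ideal R}
    (htI : t ∈ I) :
    (Ideal.span {t}).colon (I : Set R) * I = Ideal.span {t} := by
  refine le_antisymm (colon_mul_le _ _) ((Ideal.span_singleton_le_iff_mem _).mpr ?_)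
  by_contra ht_mem
  have hcolon : ((Ideal.span {t}).colon (I : Set R) * I).colon {t} ≠ ⊤ := fun htop =>
    ht_mem (Set.singleton_subset_iff.mp ((Submodule.colon_eq_top_iff_subset _).mp htop))
  have ht_colon : t ∈ (Ideal.span {t}).colon (I : Set R) := Submodule.mem_colon.mpr fun _ _ =>
    Ideal.mul_mem_right _ _ (Ideal.mem_span_singleton_self t)
  have ht_reg : t ∈ nonZeroDivisors R := mem_nonZeroDivisors_of_injective
    (IsIntegralClosure.algebraMap_injective R R K) ht.mem_nonZeroDivisors
  obtain ⟨z, hzt, hz⟩ := exists_notMem_span_singleton_forall_mul_mem hcolon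
    (Submodule.mem_colon_singleton.mpr (Ideal.mul_mem_mul ht_colon htI))
  exact hzt (Ideal.mem_span_singleton.mpr
    (dvd_of_span_singleton_mul_le (K := K) ht_colon ht (span_singleton_mul_colon_le ht_reg htI hz)))

end MultiplierRing

section InvertibleIdeals

variable {A : Type*} [CommRing A] {I I' : Ideal A}

lemma le_of_span_singleton_mul_le {t : A} (ht : t ∈ nonZeroDivisors A)
    (h : Ideal.span {t} * I ≤ Ideal.span {t} * I') : I ≤ I' := by
  intro y hy
  obtain ⟨y', hy', hyy'⟩ := Ideal.mem_span_singleton_mul.mp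
    (h (Ideal.mul_mem_mul (Ideal.mem_span_singleton_self t) hy))
  exact (mul_cancel_left_mem_nonZeroDivisors ht).mp hyy' ▸ hy'

lemma not_le_mul_self_of_mul_eq_span_singleton {t : A} (ht : t ∈ nonZeroDivisors A)
    (h : I * I' = Ideal.span {t}) {P : Ideal A}
    (hP : P ≠ ⊤) : ¬ I ≤ P * I := by
  intro hle
  refine hP (top_le_iff.mp (le_of_span_singleton_mul_le ht ?_))
  calc Ideal.span {t} * ⊤ = I * I' := by rw [h, Ideal.mul_top]
    _ ≤ P * I * I' := Ideal.mul_mono_left hle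
    _ = Ideal.span {t} * P := by rw [mul_assoc, h, mul_comm]

lemma eq_span_singleton_of_forall_isMaximal_notMem {t : A} (ht : t ∈ nonZeroDivisors A)
    (h : I * I' = Ideal.span {t}) {j : A}
    (hjI : j ∈ I) (hj : ∀ P : Ideal A, P.IsMaximal → j ∉ P * I) : I = Ideal.span {j} := by
  have hjI' : Ideal.span {j} * I' ≤ Ideal.span {t} :=
    h ▸ Ideal.mul_mono_left ((Ideal.span_singleton_le_iff_mem I).mpr hjI)
  have ht_mem : t ∈ Ideal.span {j} * I' := by
    by_contra ht_mem
    obtain ⟨P, hP, hcolon⟩ := Ideal.exists_le_maximal ((Ideal.span {j} * I').colon {t}) fun htop =>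
      ht_mem (Set.singleton_subset_iff.mp ((Submodule.colon_eq_top_iff_subset _).mp htop))
    have hle : Ideal.span {j} * I' ≤ Ideal.span {t} * P := fun y hy => by
      obtain ⟨q, rfl⟩ := Ideal.mem_span_singleton.mp (hjI' hy)
      refine Ideal.mul_mem_mul (Ideal.mem_span_singleton_self t) (hcolon ?_)
      rwa [Submodule.mem_colon_singleton, smul_eq_mul, mul_comm q]
    refine hj P hP ((Ideal.span_singleton_le_iff_mem _).mp (le_of_span_singleton_mul_le ht ?_))
    calc Ideal.span {t} * Ideal.span {j} = Ideal.span {j} * I' * I := by rw [← h]; ring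
      _ ≤ Ideal.span {t} * P * I := Ideal.mul_mono_left hle
      _ = Ideal.span {t} * (P * I) := mul_assoc _ _ _
  refine le_antisymm (le_of_span_singleton_mul_le ht ?_)
    ((Ideal.span_singleton_le_iff_mem I).mpr hjI)
  calc Ideal.span {t} * I ≤ Ideal.span {j} * I' * I :=
        Ideal.mul_mono_left ((Ideal.span_singleton_le_iff_mem _).mpr ht_mem)
    _ = Ideal.span {t} * Ideal.span {j} := by rw [← h]; ring

end InvertibleIdeals

lemma finite_maximalSpectrum_of_finite (R A : Type*) [CommRing R] [IsLocalRing R] [CommRing A]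
    [Algebra R A] [Module.Finite R A] : Finite (MaximalSpectrum A) := by
  have hfin : ((maximalIdeal R).primesOver A).Finite := Algebra.QuasiFinite.finite_primesOver _
  have := hfin.to_subtype
  refine Finite.of_injective (β := (maximalIdeal R).primesOver A)
    (fun P => ⟨P.asIdeal, P.isMaximal.isPrime, ⟨?_⟩⟩) fun _ _ h =>
    MaximalSpectrum.ext (congrArg Subtype.val h)
  exact (eq_maximalIdeal (Ideal.isMaximal_comap_of_isIntegral_of_isMaximal P.asIdeal)).symm

section Reductions

variable {R A : Type*} [CommRing R] [IsLocalRing R] [Infinite (ResidueField R)]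

variable (R) in
lemma infinite_of_nontrivial (M : Type*) [AddCommGroup M] [Module R M] [Nontrivial M] :
    Infinite M := by
  obtain ⟨v, hv⟩ := exists_ne (0 : M)
  obtain ⟨lift, hlift⟩ := (residue_surjective (R := R)).hasRightInverse
  refine Infinite.of_injective (fun c => lift c • v) fun c d hcd => ?_
  by_contra hne
  have hunit : IsUnit (lift c - lift d) := by
    rwa [← residue_ne_zero_iff_isUnit, map_sub, hlift, hlift, sub_ne_zero]
  exact hv (hunit.smul_eq_zero.mp (by rw [sub_smul, sub_eq_zero]; exact hcd))

lemma biUnion_ne_univ_of_top_notMem {M : Type*} [AddCommGroup M] [Module R M]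
    {s : Finset (Submodule R M)} (hs : ⊤ ∉ s) : ⋃ p ∈ s, (p : Set M) ≠ Set.univ := by
  intro hcovers
  obtain ⟨p, hp, hfi⟩ := Submodule.exists_finiteIndex_of_cover hcovers
  have : Finite (M ⧸ p) := AddSubgroup.finite_quotient_of_finiteIndex
  have : Nontrivial (M ⧸ p) := Submodule.Quotient.nontrivial_iff.mpr (ne_of_mem_of_not_mem hp hs)
  have : Infinite (M ⧸ p) := infinite_of_nontrivial R _
  exact not_finite (M ⧸ p)

lemma exists_mem_map_eq_span_singleton [CommRing A] [Algebra R A]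
    [Finite (MaximalSpectrum A)] {t : A} (ht : t ∈ nonZeroDivisors A) {J : Ideal R} {I' : Ideal A}
    (h : J.map (algebraMap R A) * I' = Ideal.span {t}) :
    ∃ j ∈ J, J.map (algebraMap R A) = Ideal.span {algebraMap R A j} := by
  let N (P : MaximalSpectrum A) : Submodule R J :=
    ((P.asIdeal * J.map (algebraMap R A)).restrictScalars R).comap
      ((Algebra.linearMap R A).comp J.subtype)
  have hN : ⊤ ∉ (Set.finite_range N).toFinset := by
    simp only [Set.Finite.mem_toFinset, Set.mem_range, not_exists]
    refine fun P hP => not_le_mul_self_of_mul_eq_span_singleton ht h P.isMaximal.ne_top ?_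
    exact Ideal.map_le_iff_le_comap.mpr fun y hy =>
      (hP ▸ Submodule.mem_top : (⟨y, hy⟩ : J) ∈ N P)
  obtain ⟨j, hj⟩ := (Set.ne_univ_iff_exists_notMem _).mp (biUnion_ne_univ_of_top_notMem hN)
  refine ⟨j, j.2, eq_span_singleton_of_forall_isMaximal_notMem ht h
    (Ideal.mem_map_of_mem _ j.2) fun P hP hjP => hj ?_⟩
  exact Set.mem_biUnion (by simpa using ⟨⟨P, hP⟩, rfl⟩) hjP

end Reductions

section Conductor

/-- The normalization of `R`: its integral closure in its total ring of fractions. -/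
noncomputable abbrev normalization (R : Type*) [CommRing R] : Subalgebra R (FractionRing R) :=
  integralClosure R (FractionRing R)

variable {R : Type*} [CommRing R] {J : Ideal R} {j : R}

lemma mem_conductorIdeal_iff {c : R} : c ∈ conductorIdeal R ↔
    ∀ s : normalization R,
      ∃ r, algebraMap R (FractionRing R) r = algebraMap R (FractionRing R) c * s := by
  simp only [conductorIdeal, Submodule.mem_colon, Subtype.forall, Algebra.smul_def,
    Submodule.mem_one, SetLike.mem_coe, Subalgebra.mem_toSubmodule]

lemma exists_algebraMap_eq_mul_of_mem
    (hJ : J.map (algebraMap R (normalization R)) = Ideal.span {algebraMap R _ j}) {y : R}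
    (hy : y ∈ J) : ∃ s : normalization R,
      algebraMap R (FractionRing R) y = algebraMap R (FractionRing R) j * s := by
  obtain ⟨s, hs⟩ := Ideal.mem_span_singleton.mp (hJ ▸ Ideal.mem_map_of_mem _ hy)
  exact ⟨s, congrArg Subtype.val hs⟩

lemma conductorIdeal_mul_le_span_singleton
    (hJ : J.map (algebraMap R (normalization R)) = Ideal.span {algebraMap R _ j}) :
    conductorIdeal R * J ≤ Ideal.span {j} := by
  refine Ideal.mul_le.mpr fun c hc y hy => Ideal.mem_span_singleton.mpr ?_
  obtain ⟨s, hs⟩ := exists_algebraMap_eq_mul_of_mem hJ hy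
  obtain ⟨r, hr⟩ := mem_conductorIdeal_iff.mp hc s
  refine ⟨r, IsFractionRing.injective R (FractionRing R) ?_⟩
  rw [map_mul, map_mul, hr, hs, mul_left_comm]

lemma le_conductorIdeal_of_mem
    (hJ : J.map (algebraMap R (normalization R)) = Ideal.span {algebraMap R _ j})
    (hj : j ∈ conductorIdeal R) : J ≤ conductorIdeal R := by
  refine fun y hy => mem_conductorIdeal_iff.mpr fun s' => ?_
  obtain ⟨s, hs⟩ := exists_algebraMap_eq_mul_of_mem hJ hy
  obtain ⟨r, hr⟩ := mem_conductorIdeal_iff.mp hj (s * s')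
  exact ⟨r, by rw [hr, hs, MulMemClass.coe_mul, mul_assoc]⟩

lemma finite_normalization [IsNoetherianRing R] {c : R} (hc : c ∈ nonZeroDivisors R)
    (hcC : c ∈ conductorIdeal R) : Module.Finite R (normalization R) :=
  finite_subalgebra_of_forall_mul_mem_range _ (IsLocalization.map_units _ ⟨c, hc⟩) fun s hs =>
    mem_conductorIdeal_iff.mp hcC ⟨s, hs⟩

lemma exists_pow_mem_of_isArtinianRing_quotient [IsLocalRing R] {I : Ideal R}
    [IsArtinianRing (R ⧸ I)] {a : R} (ha : a ∈ maximalIdeal R) : ∃ n, a ^ n ∈ I := by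
  obtain ⟨n, hn⟩ := exists_maximalIdeal_pow_le_of_isArtinianRing_quotient I
  exact ⟨n, hn (Ideal.pow_mem_pow ha n)⟩

lemma exists_mem_nonZeroDivisors_map_normalization_eq_span_singleton [IsNoetherianRing R]
    [IsLocalRing R] [Ring.KrullDimLE 1 R] [Infinite (ResidueField R)]
    [IsArtinianRing (R ⧸ conductorIdeal R)] (hJ : J ≠ ⊤) {a : R} (haJ : a ∈ J)
    (ha : a ∈ nonZeroDivisors R) :
    ∃ j ∈ J, j ∈ nonZeroDivisors R ∧
      J.map (algebraMap R (normalization R)) = Ideal.span {algebraMap R _ j} := by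
  obtain ⟨n, hn⟩ := exists_pow_mem_of_isArtinianRing_quotient (I := conductorIdeal R)
    (le_maximalIdeal hJ haJ)
  have := finite_normalization (pow_mem ha n) hn
  have := IsNoetherianRing.of_finite R (normalization R)
  have := finite_maximalSpectrum_of_finite R (normalization R)
  have := isArtinianRing_quotient_of_isFiniteLength (isFiniteLength_quotient_span_singleton R ha)
  have := isArtinianRing_quotient_span_algebraMap (normalization R) a
  have haK : IsUnit (algebraMap R (FractionRing R) a) := IsLocalization.map_units _ ⟨a, ha⟩
  have haS : algebraMap R (normalization R) a ∈ nonZeroDivisors (normalization R) :=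
    mem_nonZeroDivisors_of_injective (f := (normalization R).val) Subtype.val_injective
      haK.mem_nonZeroDivisors
  have haJS := Ideal.mem_map_of_mem (algebraMap R (normalization R)) haJ
  obtain ⟨j, hjJ, hj⟩ := exists_mem_map_eq_span_singleton haS <| (mul_comm _ _).trans <|
    colon_mul_eq_span_singleton (R := normalization R) (FractionRing R) haK haJS
  obtain ⟨s, hs⟩ := exists_algebraMap_eq_mul_of_mem hj haJ
  have hjK : IsUnit (algebraMap R (FractionRing R) j) :=
    isUnit_of_mul_isUnit_left (hs ▸ haK)
  exact ⟨j, hjJ, mem_nonZeroDivisors_of_injective (IsFractionRing.injective R (FractionRing R))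
    hjK.mem_nonZeroDivisors, hj⟩

end Conductor

section Length

lemma eq_or_covBy_of_krullDim_Ici_le_four {α : Type*} [PartialOrder α] {c j m t : α}
    (h : Order.krullDim (Set.Ici c) ≤ 4) (hcj : c ≤ j) (hjm : j ≤ m) (hmt : m < t) :
    j = c ∨ c ⋖ j ∨ j = m ∨ j ⋖ m := by
  by_contra! hcon
  obtain ⟨hjc, hncj, hjm', hnjm⟩ := hcon
  obtain ⟨u, hcu, huj⟩ := exists_lt_lt_of_not_covBy (hcj.lt_of_ne' hjc) hncj
  obtain ⟨v, hjv, hvm⟩ := exists_lt_lt_of_not_covBy (hjm.lt_of_ne hjm') hnjm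
  let chain : LTSeries (Set.Ici c) := LTSeries.mk 5
    ![⟨c, le_rfl⟩, ⟨u, hcu.le⟩, ⟨j, hcj⟩, ⟨v, hcj.trans hjv.le⟩, ⟨m, hcj.trans hjm⟩,
      ⟨t, hcj.trans (hjm.trans hmt.le)⟩]
    (Fin.strictMono_iff_lt_succ.mpr fun i => by
      fin_cases i
      exacts [hcu, huj, hjv, hvm, hmt])
  have hlen : ((5 : ℕ) : WithBot ℕ∞) ≤ 4 := (Order.LTSeries.length_le_krullDim chain).trans h
  exact absurd hlen (by decide)

lemma eq_or_covBy_of_moduleLength_le_four {R : Type*} [CommRing R] {C J M : Ideal R}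
    (h : moduleLength R (R ⧸ C) ≤ 4) (hCJ : C ≤ J) (hJM : J ≤ M) (hM : M ≠ ⊤) :
    J = C ∨ C ⋖ J ∨ J = M ∨ J ⋖ M := by
  refine eq_or_covBy_of_krullDim_Ici_le_four ?_ hCJ hJM hM.lt_top
  rwa [← Order.krullDim_eq_of_orderIso (Submodule.comapMkQRelIso C)]

lemma isArtinianRing_quotient_of_moduleLength_le {R : Type*} [CommRing R] {I : Ideal R} {n : ℕ}
    (h : moduleLength R (R ⧸ I) ≤ n) : IsArtinianRing (R ⧸ I) := by
  refine isArtinianRing_quotient_of_isFiniteLength (Module.length_ne_top_iff.mp fun htop => ?_)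
  rw [moduleLength, ← Module.coe_length, htop] at h
  exact ENat.natCast_ne_top n (top_le_iff.mp (WithBot.coe_le_coe.mp h))

end Length

section StableIdeals

variable {R K : Type*} [CommRing R] [CommRing K] [Algebra R K] {I J : Ideal R} {x : R}

lemma mem_multiplierRing_iff (hxI : x ∈ I) (hx : IsUnit (algebraMap R K x))
    (hI : I * I ≤ Ideal.span {x} * I) {b : K} :
    b ∈ multiplierRing K I ↔ ∃ y ∈ I, algebraMap R K x * b = algebraMap R K y := by
  refine ⟨fun hb => by simpa only [mul_comm b] using hb x hxI, ?_⟩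
  rintro ⟨y, hy, hxb⟩ y₁ hy₁
  obtain ⟨y₂, hy₂, hxy⟩ := Ideal.mem_span_singleton_mul.mp (hI (Ideal.mul_mem_mul hy hy₁))
  refine ⟨y₂, hy₂, hx.mul_left_cancel ?_⟩
  rw [← mul_assoc, hxb, ← map_mul, ← map_mul, hxy]

lemma exists_ideal_multiplierRing_mem_iff (hxI : x ∈ I) (hx : IsUnit (algebraMap R K x))
    (hIJ : I * J ≤ Ideal.span {x} * J) : ∃ n : Ideal (multiplierRing K I),
      ∀ b, b ∈ n ↔ ∃ p ∈ J, algebraMap R K x * b = algebraMap R K p := by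
  refine ⟨⟨⟨⟨{b | ∃ p ∈ J, algebraMap R K x * b = algebraMap R K p}, ?_⟩, ?_⟩, ?_⟩, fun _ => .rfl⟩
  · rintro b b' ⟨p, hp, hb⟩ ⟨p', hp', hb'⟩
    exact ⟨p + p', J.add_mem hp hp', by rw [AddMemClass.coe_add, mul_add, hb, hb', map_add]⟩
  · exact ⟨0, J.zero_mem, by simp⟩
  · rintro b b' ⟨p, hp, hb'⟩
    obtain ⟨y, hy, hb⟩ := b.2 x hxI
    obtain ⟨p', hp', hxp⟩ := Ideal.mem_span_singleton_mul.mp (hIJ (Ideal.mul_mem_mul hy hp))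
    refine ⟨p', hp', hx.mul_left_cancel ?_⟩
    rw [← map_mul, hxp, map_mul, ← hb, ← hb', smul_eq_mul, MulMemClass.coe_mul]
    ring

-- Multiplication by `x` identifies `I : I` with `I`, so that `J` becomes a proper ideal of `I : I`;
-- `w / x` represents a socle element modulo `x`.
lemma exists_mem_notMem_span_singleton_mul [IsNoetherianRing R]
    [IsArtinianRing (R ⧸ Ideal.span {x})] (hx : x ∈ nonZeroDivisors R) (hxI : x ∈ I)
    (hI : I * I ≤ Ideal.span {x} * I) (hJI : J ≤ I) (hIJ : I * J ≤ Ideal.span {x} * J)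
    (hxJ : x ∉ J) (hxxJ : x * x ∈ J) :
    ∃ w ∈ I, w ∉ Ideal.span {x} * I ∧ Ideal.span {w} * J ≤ Ideal.span {x * x} * I := by
  let K := FractionRing R
  let B := multiplierRing K I
  have hxK : IsUnit (algebraMap R K x) := IsLocalization.map_units K ⟨x, hx⟩
  have hinj : Function.Injective (algebraMap R K) := IsFractionRing.injective R K
  have mem_B {b : K} := mem_multiplierRing_iff (b := b) hxI hxK hI
  obtain ⟨n, mem_n⟩ := exists_ideal_multiplierRing_mem_iff hxI hxK hIJ
  have hn : n ≠ ⊤ := fun htop => hxJ <| by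
    obtain ⟨p, hp, hxp⟩ := (mem_n 1).mp (htop ▸ Submodule.mem_top)
    rw [OneMemClass.coe_one, mul_one] at hxp
    exact hinj hxp ▸ hp
  have : Module.Finite R B := finite_multiplierRing hxI hxK
  have := isArtinianRing_quotient_span_algebraMap B x
  obtain ⟨z, hzx, hzn⟩ := exists_notMem_span_singleton_forall_mul_mem hn
    ((mem_n (algebraMap R B x)).mpr ⟨x * x, hxxJ, (map_mul _ _ _).symm⟩)
  obtain ⟨w, hwI, hxz⟩ := mem_B.mp z.2
  refine ⟨w, hwI, fun hw => hzx ?_, Ideal.span_singleton_mul_le_iff.mpr fun p hp => ?_⟩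
  · obtain ⟨y, hy, rfl⟩ := Ideal.mem_span_singleton_mul.mp hw
    obtain ⟨b, hb⟩ := hxK.dvd (a := algebraMap R K y)
    refine Ideal.mem_span_singleton.mpr ⟨⟨b, mem_B.mpr ⟨y, hy, hb.symm⟩⟩, Subtype.ext ?_⟩
    refine (hxK.mul_left_cancel (hxz.trans (map_mul _ _ _))).trans hb
  · obtain ⟨b, hb⟩ := hxK.dvd (a := algebraMap R K p)
    have hbB : b ∈ B := mem_B.mpr ⟨p, hJI hp, hb.symm⟩
    obtain ⟨b', hb'⟩ := Ideal.mem_span_singleton.mp (hzn ⟨b, hbB⟩ ((mem_n _).mpr ⟨p, hp, hb.symm⟩))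
    obtain ⟨y, hy, hxb'⟩ := mem_B.mp b'.2
    have hzb : (z : K) * b = algebraMap R K x * b' := congrArg Subtype.val hb'
    refine Ideal.mem_span_singleton_mul.mpr ⟨y, hy, hinj ?_⟩
    rw [map_mul, map_mul, map_mul, ← hxz, hb, ← hxb', ← hzb]
    ring

end StableIdeals

section MinimalMultiplicity

variable {R : Type*} [CommRing R] [IsLocalRing R] {J : Ideal R} {x : R}

lemma span_singleton_mul_maximalIdeal_le (hprin : ¬ (maximalIdeal R).IsPrincipal) {w d : R}
    (hd : d ∈ nonZeroDivisors R) (h : Ideal.span {w} * maximalIdeal R ≤ Ideal.span {d}) :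
    Ideal.span {w} * maximalIdeal R ≤ Ideal.span {d} * maximalIdeal R := by
  have dvd_mul {y : R} (hy : y ∈ maximalIdeal R) : d ∣ w * y :=
    Ideal.mem_span_singleton.mp (h (Ideal.mul_mem_mul (Ideal.mem_span_singleton_self w) hy))
  refine Ideal.span_singleton_mul_le_iff.mpr fun z hz => ?_
  obtain ⟨u, hu⟩ := dvd_mul hz
  refine Ideal.mem_span_singleton_mul.mpr
    ⟨u, (mem_maximalIdeal u).mpr fun hunit => hprin ?_, hu.symm⟩
  have hwz : w * z ∈ nonZeroDivisors R := hu ▸ mul_mem hd hunit.mem_nonZeroDivisors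
  refine ⟨z, le_antisymm (fun y hy => ?_) ((Ideal.span_singleton_le_iff_mem _).mpr hz)⟩
  refine Ideal.mem_span_singleton.mpr ?_
  have hdvd : w * z ∣ w * y := hu ▸ hunit.mul_right_dvd.mpr (dvd_mul hy)
  obtain ⟨r, hr⟩ := hdvd
  refine ⟨r, (mul_cancel_left_mem_nonZeroDivisors (mul_mem_nonZeroDivisors.mp hwz).1).mp ?_⟩
  rw [hr, mul_assoc]

lemma mem_span_singleton_mul_maximalIdeal_of_mul_le (hprin : ¬ (maximalIdeal R).IsPrincipal)
    (hx : x ∈ nonZeroDivisors R) (hxm : x ∈ maximalIdeal R) {w : R}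
    (h : Ideal.span {w} * maximalIdeal R ≤ Ideal.span {x * x}) :
    w ∈ Ideal.span {x} * maximalIdeal R := by
  obtain ⟨y, hy, hyw⟩ := Ideal.mem_span_singleton_mul.mp <|
    span_singleton_mul_maximalIdeal_le hprin (mul_mem hx hx) h
      (Ideal.mul_mem_mul (Ideal.mem_span_singleton_self w) hxm)
  rw [mul_assoc, mul_comm w, mul_cancel_left_mem_nonZeroDivisors hx] at hyw
  exact Ideal.mem_span_singleton_mul.mpr ⟨y, hy, hyw⟩

lemma le_or_maximalIdeal_le_of_covBy (hJ : J ⋖ maximalIdeal R) {I : Ideal R} (hJI : J ≤ I) :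
    I ≤ J ∨ maximalIdeal R ≤ I := by
  by_cases hI : I = ⊤
  · exact .inr (hI ▸ le_top)
  · exact (hJ.eq_or_eq hJI (le_maximalIdeal hI)).imp Eq.le Eq.ge

lemma maximalIdeal_sq_le_of_covBy [IsNoetherianRing R] (hJ : J ⋖ maximalIdeal R) :
    maximalIdeal R ^ 2 ≤ J := by
  refine le_sup_right.trans ((le_or_maximalIdeal_le_of_covBy hJ le_sup_left).resolve_right
    fun hle => hJ.lt.not_ge (Submodule.le_of_le_smul_of_le_jacobson_bot (I := maximalIdeal R)
      (IsNoetherian.noetherian _) (maximalIdeal_le_jacobson ⊥) ?_))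
  rwa [smul_eq_mul, ← sq]

lemma maximalIdeal_mul_le_span_singleton
    (hm : maximalIdeal R ^ 2 = Ideal.span {x} * maximalIdeal R) (hJ : J ≤ maximalIdeal R) :
    maximalIdeal R * J ≤ Ideal.span {x} :=
  calc maximalIdeal R * J ≤ maximalIdeal R ^ 2 := sq (maximalIdeal R) ▸ Ideal.mul_mono_right hJ
    _ = Ideal.span {x} * maximalIdeal R := hm
    _ ≤ Ideal.span {x} := Ideal.mul_le_left

lemma isReflexive_of_covBy_maximalIdeal [IsNoetherianRing R] [IsArtinianRing (R ⧸ Ideal.span {x})]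
    (hx : x ∈ nonZeroDivisors R) (hxm : x ∈ maximalIdeal R)
    (hm : maximalIdeal R ^ 2 = Ideal.span {x} * maximalIdeal R) (hJ : J ⋖ maximalIdeal R)
    (htr : traceIdeal R J = J) : Module.IsReflexive R J := by
  have hmJ := maximalIdeal_mul_le_span_singleton hm hJ.le
  have hxJ : x ∉ J := fun hxJ =>
    hJ.lt.not_ge (le_of_mul_le_span_singleton_of_traceIdeal_eq htr hxJ hx hmJ)
  have hxx : x * x ∈ nonZeroDivisors R := mul_mem hx hx
  have hxxJ : x * x ∈ J :=
    maximalIdeal_sq_le_of_covBy hJ (sq (maximalIdeal R) ▸ Ideal.mul_mem_mul hxm hxm)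
  have hprin := not_isPrincipal_maximalIdeal_of_traceIdeal_eq htr
    (ne_top_of_le_ne_top (maximalIdeal.isMaximal R).ne_top hJ.le) hxxJ hxx
  obtain ⟨w, -, hw, hwJ⟩ := exists_mem_notMem_span_singleton_mul hx hxm
    (sq (maximalIdeal R) ▸ hm.le) hJ.le (mul_le_span_singleton_mul_of_traceIdeal_eq htr hx hmJ)
    hxJ hxxJ
  refine isReflexive_of_colon_colon_le hxxJ hxx
    ((le_or_maximalIdeal_le_of_covBy hJ ?_).resolve_right fun hle => hw ?_)
  · exact le_colon_colon _ _
  · have hwJ_colon : w ∈ (Ideal.span {x * x}).colon (J : Set R) := Submodule.mem_colon.mpr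
      fun y hy => Ideal.mul_le_left (hwJ (Ideal.mul_mem_mul (Ideal.mem_span_singleton_self w) hy))
    exact mem_span_singleton_mul_maximalIdeal_of_mul_le hprin hx hxm <|
      Ideal.span_singleton_mul_le_iff.mpr fun y hy =>
        mul_comm y w ▸ Submodule.mem_colon.mp (hle hy) w hwJ_colon

end MinimalMultiplicity

lemma isReflexive_of_conductorIdeal_covBy {R : Type*} [CommRing R] {J : Ideal R} {j : R}
    (hjJ : j ∈ J) (hj : j ∈ nonZeroDivisors R)
    (hJS : J.map (algebraMap R (normalization R)) = Ideal.span {algebraMap R _ j})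
    (hcov : conductorIdeal R ⋖ J) (htr : traceIdeal R J = J) : Module.IsReflexive R J := by
  have hspan : Ideal.span {j} ≤ J := (Ideal.span_singleton_le_iff_mem J).mpr hjJ
  have hjC : j ∉ conductorIdeal R := fun hjC => hcov.lt.not_ge (le_conductorIdeal_of_mem hJS hjC)
  have hsup : conductorIdeal R ⊔ Ideal.span {j} = J :=
    (hcov.eq_or_eq le_sup_left (sup_le hcov.le hspan)).resolve_left fun h =>
      hjC (sup_eq_left.mp h (Ideal.mem_span_singleton_self j))
  refine isReflexive_of_mul_self_le_span_singleton htr hjJ hj ?_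
  calc J * J = conductorIdeal R * J ⊔ Ideal.span {j} * J := by rw [← Ideal.sup_mul, hsup]
    _ ≤ Ideal.span {j} := sup_le (conductorIdeal_mul_le_span_singleton hJS) Ideal.mul_le_left

theorem trace_reflexive_of_colength_four_minimalMultiplicity_general
    (R : Type*) [CommRing R] [IsNoetherianRing R] [IsLocalRing R] [Infinite (ResidueField R)]
    (hlen : moduleLength R (R ⧸ conductorIdeal R) ≤ 4) (hmm : HasMinimalMultiplicity R)
    (J : Ideal R) (hproper : J ≠ ⊤) (hreg : ∃ x ∈ J, x ∈ nonZeroDivisors R)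
    (htr : traceIdeal R J = J) : Module.IsReflexive R J := by
  obtain ⟨x, ⟨hxm, -⟩, hm⟩ := hmm
  obtain ⟨a, haJ, ha⟩ := hreg
  have hJm : J ≤ maximalIdeal R := le_maximalIdeal hproper
  have hmJ := maximalIdeal_mul_le_span_singleton hm hJm
  have hx : x ∈ nonZeroDivisors R := by
    obtain ⟨b, hb⟩ := Ideal.mem_span_singleton.mp (hmJ (Ideal.mul_mem_mul (hJm haJ) haJ))
    exact (mul_mem_nonZeroDivisors.mp (hb ▸ mul_mem ha ha)).1
  have := krullDimLE_one_of_maximalIdeal_sq_le_span_singleton hxm (hm.le.trans Ideal.mul_le_left)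
  have := isArtinianRing_quotient_of_isFiniteLength (isFiniteLength_quotient_span_singleton R hx)
  have := isArtinianRing_quotient_of_moduleLength_le (n := 4) hlen
  obtain ⟨j, hjJ, hj, hJS⟩ :=
    exists_mem_nonZeroDivisors_map_normalization_eq_span_singleton hproper haJ ha
  have hCJ := conductorIdeal_mul_le_span_singleton hJS
  have hC : conductorIdeal R ≤ J := le_of_mul_le_span_singleton_of_traceIdeal_eq htr hjJ hj hCJ
  rcases eq_or_covBy_of_moduleLength_le_four hlen hC hJm (maximalIdeal.isMaximal R).ne_top with
    rfl | hcov | rfl | hcov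
  · exact isReflexive_of_mul_self_le_span_singleton htr hjJ hj hCJ
  · exact isReflexive_of_conductorIdeal_covBy hjJ hj hJS hcov htr
  · exact isReflexive_of_mul_self_le_span_singleton htr hxm hx hmJ
  · exact isReflexive_of_covBy_maximalIdeal hx hxm hm hcov htr

/-- Let `R` be an analytically unramified one-dimensional non-regular
Cohen–Macaulay local ring with infinite residue field, conductor `C`, `length(R/C) = 4`, and
minimal multiplicity. Then every proper regular trace ideal of `R` is reflexive. -/
theorem trace_reflexive_of_colength_four_minimalMultiplicity
    (R : Type*) [CommRing R] [IsNoetherianRing R] [IsLocalRing R]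
    (hur : IsReduced (AdicCompletion (maximalIdeal R) R))
    (hdim : ringKrullDim R = 1) (hCM : IsCohenMacaulayLocalRing R)
    (hnonreg : ¬ (maximalIdeal R).IsPrincipal) (hk : Infinite (ResidueField R))
    (hlen : moduleLength R (R ⧸ conductorIdeal R) = 4)
    (hmm : HasMinimalMultiplicity R)
    (J : Ideal R) (hproper : J ≠ ⊤) (hreg : ∃ x ∈ J, x ∈ nonZeroDivisors R)
    (htr : traceIdeal R ↥J = J) :
    Module.IsReflexive R ↥J :=
  trace_reflexive_of_colength_four_minimalMultiplicity_general R hlen.le hmm J hproper hreg htr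
end
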